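/- Let G be a connected simple graph on n vertices whose block decomposition consists of k ≥ 1 blocks, and suppose that every block of G either has maximum degree at most 3 or is claw-free. Then G has a spanning closed walk of length at most 4n/3 + 2k/3 − 4/3. -/

import Mathlib

open SimpleGraph

/-- A block of a graph `G`: a maximal vertex set inducing a connected subgraph
without a cut vertex. -/
def IsBlock {V : Type*} (G : SimpleGraph V) (B : Set V) : Prop :=
  (G.induce B).Connected ∧
  (∀ v ∈ B, (G.induce (B \ {v})).Preconnected) ∧
  ∀ B' : Set V, B ⊆ B' → (G.induce B').Connected →
    (∀ v ∈ B', (G.induce (B' \ {v})).Preconnected) → B' = B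

set_option linter.unusedSectionVars false
set_option linter.unusedSimpArgs false

namespace TourAux
open Finset

/-- indicator of a vertex, mod 2 -/
def dl {V : Type*} [DecidableEq V] (a v : V) : ZMod 2 := if a = v then 1 else 0

/-- mod 2 boundary of an edge set of a multigraph -/
def bd {V E : Type*} [DecidableEq V] (s t : E → V) (F : Finset E) (v : V) : ZMod 2 :=
  ∑ e ∈ F, (dl (s e) v + dl (t e) v)

section basic
variable {V E : Type*} [DecidableEq V] [DecidableEq E] (s t : E → V)

lemma z2 (x : ZMod 2) : x + x = 0 := CharTwo.add_self_eq_zero x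

lemma dl_add_self (a : V) : (fun v => dl a v + dl a v) = 0 := by
  funext v; exact z2 _

lemma bd_union {A B : Finset E} (h : Disjoint A B) (v : V) :
    bd s t (A ∪ B) v = bd s t A v + bd s t B v := by
  unfold bd; exact Finset.sum_union h

lemma bd_sdiff {A B : Finset E} (h : B ⊆ A) (v : V) :
    bd s t (A \ B) v = bd s t A v + bd s t B v := by
  have h1 := bd_union s t (A := A \ B) (B := B) sdiff_disjoint v
  rw [Finset.sdiff_union_of_subset h] at h1
  rw [h1, add_assoc, z2, add_zero]

lemma bd_insert {A : Finset E} {e : E} (h : e ∉ A) (v : V) :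
    bd s t (insert e A) v = bd s t A v + (dl (s e) v + dl (t e) v) := by
  unfold bd; rw [Finset.sum_insert h]; ring

lemma bd_erase {A : Finset E} {e : E} (h : e ∈ A) (v : V) :
    bd s t (A.erase e) v = bd s t A v + (dl (s e) v + dl (t e) v) := by
  have h1 := bd_insert s t (Finset.notMem_erase e A) v
  rw [Finset.insert_erase h] at h1
  rw [h1, add_assoc, z2, add_zero]

lemma bd_symmDiff (A B : Finset E) (v : V) :
    bd s t (symmDiff A B) v = bd s t A v + bd s t B v := by
  have h1 : symmDiff A B = (A \ (A ∩ B)) ∪ (B \ (A ∩ B)) := by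
    ext x; simp only [Finset.mem_symmDiff, mem_union, mem_sdiff, mem_inter]; tauto
  have h2 : Disjoint (A \ (A ∩ B)) (B \ (A ∩ B)) := by
    rw [Finset.disjoint_left]; intro x; simp only [mem_sdiff, mem_inter]; tauto
  rw [h1, bd_union s t h2, bd_sdiff s t Finset.inter_subset_left,
    bd_sdiff s t Finset.inter_subset_right]
  have := z2 (bd s t (A ∩ B) v)
  linear_combination this

lemma sum_bd (F : Finset E) (K : Finset V) :
    ∑ v ∈ K, bd s t F v =
      ∑ e ∈ F, ((if s e ∈ K then 1 else 0) + (if t e ∈ K then 1 else 0)) := by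
  unfold bd dl
  rw [Finset.sum_comm]
  refine Finset.sum_congr rfl fun e _ => ?_
  rw [Finset.sum_add_distrib]
  simp

/-- edges with exactly one end at `b` -/
def st (b : V) (e : E) : Prop := (s e = b ∧ t e ≠ b) ∨ (t e = b ∧ s e ≠ b)

instance (b : V) (e : E) : Decidable (st s t b e) := by unfold st; infer_instance

lemma bd_eq_card (F : Finset E) (b : V) :
    bd s t F b = ((F.filter (st s t b)).card : ZMod 2) := by
  unfold bd
  rw [Finset.card_filter]
  push_cast
  refine Finset.sum_congr rfl fun e _ => ?_
  unfold dl st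
  by_cases h1 : s e = b <;> by_cases h2 : t e = b <;> simp [h1, h2]
  exact z2 1

/-- closed vertex sets -/
lemma reach_lemma [Fintype V] (P : Finset E) (x y : V) (W : Set V)
    (hP : ∀ v, bd s t P v = dl x v + dl y v) (hx : x ∉ W) (hy : y ∈ W) :
    ∃ R ⊆ P, ∃ z ∈ W, (∀ v, bd s t R v = dl x v + dl z v) ∧
      ∃ g ∈ R, ((s g = z ∧ t g ∉ W) ∨ (t g = z ∧ s g ∉ W)) ∧
        ∀ e ∈ R, e ≠ g → s e ∉ W ∧ t e ∉ W := by
  classical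
  let K : Finset V := univ.filter fun v => v ∉ W ∧ ∃ Q ⊆ P,
    (∀ e ∈ Q, s e ∉ W ∧ t e ∉ W) ∧ ∀ u, bd s t Q u = dl x u + dl v u
  have hxK : x ∈ K := by
    simp only [K, mem_filter, mem_univ, true_and]
    refine ⟨hx, ∅, by simp, by simp, fun u => ?_⟩
    rw [z2]; simp [bd]
  have hyK : y ∉ K := by simp [K, hy]
  by_cases hcl : ∀ e ∈ P, (s e ∈ K ↔ t e ∈ K)
  · exfalso
    have h1 := sum_bd s t P K
    have h2 : ∑ e ∈ P, ((if s e ∈ K then (1 : ZMod 2) else 0) + (if t e ∈ K then 1 else 0)) = 0 := by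
      refine Finset.sum_eq_zero fun e he => ?_
      have := hcl e he
      by_cases h : s e ∈ K
      · simp [h, this.1 h]; exact z2 1
      · have h' : t e ∉ K := fun h' => h (this.2 h')
        simp [h, h']
    rw [h2] at h1
    have h3 : ∑ v ∈ K, bd s t P v = 1 := by
      simp_rw [hP]
      rw [Finset.sum_add_distrib]
      simp [dl, hxK, hyK]
    rw [h3] at h1
    exact one_ne_zero h1
  · push Not at hcl
    obtain ⟨g, hgP, hg⟩ := hcl
    have key : ∃ c z, c ∈ K ∧ z ∉ K ∧ ((s g = z ∧ t g = c) ∨ (t g = z ∧ s g = c)) := by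
      by_cases h : s g ∈ K
      · exact ⟨s g, t g, h, by tauto, by tauto⟩
      · exact ⟨t g, s g, by tauto, by tauto, by tauto⟩
    obtain ⟨c, z, hc, hz, hgcz⟩ := key
    simp only [K, mem_filter, mem_univ, true_and] at hc hz
    obtain ⟨hcW, Q, hQP, hQW, hQ⟩ := hc
    have hdl : ∀ v, dl (s g) v + dl (t g) v = dl c v + dl z v := by
      intro v
      rcases hgcz with ⟨h1, h2⟩ | ⟨h1, h2⟩ <;> rw [h1, h2] ; ring
    have hzW : z ∈ W := by
      by_contra hzW
      apply hz
      refine ⟨hzW, ?_⟩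
      have hgW : s g ∉ W ∧ t g ∉ W := by
        rcases hgcz with ⟨h1, h2⟩ | ⟨h1, h2⟩ <;> simp [h1, h2, hcW, hzW]
      by_cases hgQ : g ∈ Q
      · refine ⟨Q.erase g, (Finset.erase_subset _ _).trans hQP,
          fun e he => hQW e (Finset.mem_of_mem_erase he), fun u => ?_⟩
        rw [bd_erase s t hgQ, hQ, hdl]
        linear_combination z2 (dl c u)
      · refine ⟨insert g Q, Finset.insert_subset hgP hQP, ?_, fun u => ?_⟩
        · intro e he
          rcases Finset.mem_insert.1 he with rfl | he
          · exact hgW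
          · exact hQW e he
        rw [bd_insert s t hgQ, hQ, hdl]
        linear_combination z2 (dl c u)
    have hgQ : g ∉ Q := by
      intro h
      have := hQW g h
      rcases hgcz with ⟨h1, h2⟩ | ⟨h1, h2⟩
      · exact this.1 (h1 ▸ hzW)
      · exact this.2 (h1 ▸ hzW)
    refine ⟨insert g Q, Finset.insert_subset hgP hQP, z, hzW, fun u => ?_, g,
      Finset.mem_insert_self _ _, ?_, ?_⟩
    · rw [bd_insert s t hgQ, hQ, hdl]
      linear_combination z2 (dl c u)
    · rcases hgcz with ⟨h1, h2⟩ | ⟨h1, h2⟩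
      · exact Or.inl ⟨h1, h2 ▸ hcW⟩
      · exact Or.inr ⟨h1, h2 ▸ hcW⟩
    · intro e he hne
      exact hQW e ((Finset.mem_insert.1 he).resolve_left hne)

end basic
end TourAux

namespace TourAux
open Finset
section step
variable {V E : Type*} [DecidableEq V] [DecidableEq E] (s t : E → V)

/-- signed weight: positive on `C`, negative off `C` -/
def om (C : Finset E) (w : E → ℕ) (P : Finset E) : ℤ :=
  ∑ e ∈ P, (if e ∈ C then (w e : ℤ) else -(w e : ℤ))

variable (C : Finset E) (w : E → ℕ)

lemma om_union {A B : Finset E} (h : Disjoint A B) :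
    om C w (A ∪ B) = om C w A + om C w B := Finset.sum_union h

lemma om_sdiff {A B : Finset E} (h : B ⊆ A) :
    om C w (A \ B) = om C w A - om C w B := by
  have := om_union C w (A := A \ B) (B := B) sdiff_disjoint
  rw [Finset.sdiff_union_of_subset h] at this
  linarith

lemma om_insert {A : Finset E} {e : E} (h : e ∉ A) :
    om C w (insert e A) = om C w A + (if e ∈ C then (w e : ℤ) else -(w e : ℤ)) := by
  unfold om; rw [Finset.sum_insert h]; ring

lemma om_erase {A : Finset E} {e : E} (h : e ∈ A) :
    om C w (A.erase e) = om C w A - (if e ∈ C then (w e : ℤ) else -(w e : ℤ)) := by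
  have := om_insert C w (Finset.notMem_erase e A)
  rw [Finset.insert_erase h] at this
  linarith

lemma om_symmDiff (A : Finset E) :
    om C w A = ∑ e ∈ C, (w e : ℤ) - ∑ e ∈ symmDiff C A, (w e : ℤ) := by
  have h1 : symmDiff C A = (C \ (C ∩ A)) ∪ (A \ C) := by
    ext x; simp only [Finset.mem_symmDiff, mem_union, mem_sdiff, mem_inter]; tauto
  have h2 : Disjoint (C \ (C ∩ A)) (A \ C) := by
    rw [Finset.disjoint_left]; intro x; simp only [mem_sdiff, mem_inter]; tauto
  rw [h1, Finset.sum_union h2]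
  have h3 : om C w A = om C w (A ∩ C) + om C w (A \ C) := by
    rw [← om_union C w, Finset.union_comm, Finset.sdiff_union_inter]
    rw [Finset.disjoint_left]; intro x; simp only [mem_sdiff, mem_inter]; tauto
  have h4 : om C w (A ∩ C) = ∑ e ∈ C ∩ A, (w e : ℤ) := by
    rw [Finset.inter_comm C A]
    refine Finset.sum_congr rfl fun e he => ?_
    rw [if_pos (Finset.mem_inter.1 he).2]
  have h5 : om C w (A \ C) = - ∑ e ∈ A \ C, (w e : ℤ) := by
    rw [← Finset.sum_neg_distrib]
    refine Finset.sum_congr rfl fun e he => ?_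
    rw [if_neg (Finset.mem_sdiff.1 he).2]
  have h6 := Finset.sum_sdiff (f := fun e => (w e : ℤ)) (Finset.inter_subset_left (s₁ := C) (s₂ := A))
  linarith

/-- other end -/
lemma st_other {b : V} {e : E} (h : st s t b e) :
    ∃ c, c ≠ b ∧ (∀ v, dl (s e) v + dl (t e) v = dl b v + dl c v) ∧
      ((s e = b ∧ t e = c) ∨ (t e = b ∧ s e = c)) := by
  rcases h with ⟨h1, h2⟩ | ⟨h1, h2⟩
  · exact ⟨t e, h2, fun v => by rw [h1], Or.inl ⟨h1, rfl⟩⟩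
  · exact ⟨s e, h2, fun v => by rw [h1, add_comm], Or.inr ⟨h1, rfl⟩⟩

/-- every edge at the end of an optimal join is in the join iff it is off `C`. -/
lemma opt_star (hw : ∀ e, s e ≠ t e → 1 ≤ w e)
    (hcons : ∀ Z : Finset E, (∀ v, bd s t Z v = 0) → 0 ≤ om C w Z)
    (a b : V) (P : Finset E) (hP : ∀ v, bd s t P v = dl a v + dl b v)
    (hneg : om C w P < 0)
    (hopt : ∀ a' b' P', a' ≠ b' → (∀ v, bd s t P' v = dl a' v + dl b' v) → om C w P ≤ om C w P')
    (e : E) (he : st s t b e) : e ∈ P ↔ e ∉ C := by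
  obtain ⟨c, hcb, hc, hor⟩ := st_other s t he
  have hne : s e ≠ t e := by
    rcases he with ⟨h1, h2⟩ | ⟨h1, h2⟩
    · rw [h1]; exact h2.symm
    · rw [h1]; exact h2
  have hwe := hw e hne
  have gen : ∀ X : Finset E, (∀ v, bd s t X v = dl a v + dl c v) → om C w P ≤ om C w X := by
    intro X hX
    by_cases hac : a = c
    · subst hac
      have := hcons X (fun v => by rw [hX, z2])
      linarith
    · exact hopt a c X hac hX
  by_cases heP : e ∈ P
  · simp only [heP, true_iff]
    intro heC
    have := gen (P.erase e) (fun v => by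
      rw [bd_erase s t heP, hP, hc]; linear_combination z2 (dl b v))
    rw [om_erase C w heP, if_pos heC] at this
    omega
  · simp only [heP, false_iff, not_not]
    by_contra heC
    have := gen (insert e P) (fun v => by
      rw [bd_insert s t heP, hP, hc]; linear_combination z2 (dl b v))
    rw [om_insert C w heP, if_neg heC] at this
    omega

variable [Fintype V]

/-- splitting an even set at an edge of the star of `b`. -/
lemma split_at (Z : Finset E) (hZ : ∀ v, bd s t Z v = 0) (b : V) (e1 : E) (h1 : e1 ∈ Z)
    (hst : st s t b e1) :
    ∃ Z1 ⊆ Z, (∀ v, bd s t Z1 v = 0) ∧ ∃ e2, e1 ≠ e2 ∧ Z1.filter (st s t b) = {e1, e2} := by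
  obtain ⟨c, hcb, hc, hor⟩ := st_other s t hst
  obtain ⟨R, hRZ, z, hz, hR, g, hgR, hg, hall⟩ := reach_lemma s t (Z.erase e1) c b {b}
    (fun v => by rw [bd_erase s t h1, hZ, hc]; ring) (by simpa using hcb) rfl
  rw [Set.mem_singleton_iff] at hz
  subst hz
  have he1R : e1 ∉ R := fun h => by simpa using hRZ h
  refine ⟨insert e1 R, Finset.insert_subset h1 (hRZ.trans (Finset.erase_subset _ _)),
    fun v => ?_, g, ?_, ?_⟩
  · rw [bd_insert s t he1R, hR, hc]; linear_combination z2 (dl c v) + z2 (dl z v)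
  · rintro rfl; exact he1R hgR
  · ext e
    simp only [mem_filter, mem_insert, mem_singleton]
    constructor
    · rintro ⟨h | h, h'⟩
      · exact Or.inl h
      · right
        by_contra hne
        have := hall e h hne
        simp only [Set.mem_singleton_iff] at this
        rcases h' with h' | h'
        · exact this.1 h'.1
        · exact this.2 h'.1
    · rintro (rfl | rfl)
      · exact ⟨Or.inl rfl, hst⟩
      · refine ⟨Or.inr hgR, ?_⟩
        simpa [st] using hg

/-- In a minimal even set any two touched vertices are joined inside. -/
lemma min_even_join (Z : Finset E)
    (hmin : ∀ Z' ⊆ Z, (∀ v, bd s t Z' v = 0) → Z' = ∅ ∨ Z' = Z)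
    (hZ : ∀ v, bd s t Z v = 0) (b z : V) (hb : ∃ e ∈ Z, s e = b ∨ t e = b)
    (hz : ∃ e ∈ Z, s e = z ∨ t e = z) :
    ∃ C1 ⊆ Z, ∀ v, bd s t C1 v = dl b v + dl z v := by
  classical
  let K : Finset V := univ.filter fun v => ∃ Q ⊆ Z, ∀ u, bd s t Q u = dl b u + dl v u
  have hbK : b ∈ K := by
    simp only [K, mem_filter, mem_univ, true_and]
    exact ⟨∅, by simp, fun u => by rw [z2]; simp [bd]⟩
  have hstep : ∀ e ∈ Z, ∀ c d, (∀ v, dl (s e) v + dl (t e) v = dl c v + dl d v) →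
      c ∈ K → d ∈ K := by
    intro e he c d hcd hc
    simp only [K, mem_filter, mem_univ, true_and] at hc ⊢
    obtain ⟨Q, hQ, hQ'⟩ := hc
    by_cases heQ : e ∈ Q
    · exact ⟨Q.erase e, (Finset.erase_subset _ _).trans hQ, fun u => by
        rw [bd_erase s t heQ, hQ', hcd]; linear_combination z2 (dl c u)⟩
    · exact ⟨insert e Q, Finset.insert_subset he hQ, fun u => by
        rw [bd_insert s t heQ, hQ', hcd]; linear_combination z2 (dl c u)⟩
  have hcl : ∀ e ∈ Z, (s e ∈ K ↔ t e ∈ K) := fun e he =>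
    ⟨hstep e he _ _ (fun v => rfl), hstep e he _ _ (fun v => add_comm _ _)⟩
  have hev : ∀ v, bd s t (Z.filter fun e => s e ∈ K) v = 0 := by
    intro v
    unfold bd
    rw [Finset.sum_filter]
    by_cases hv : v ∈ K
    · refine Eq.trans ?_ (hZ v)
      unfold bd
      refine Finset.sum_congr rfl fun e he => ?_
      split_ifs with h
      · rfl
      · have h' : t e ∉ K := fun h' => h ((hcl e he).2 h')
        have h1 : s e ≠ v := fun h1 => h (h1 ▸ hv)
        have h2 : t e ≠ v := fun h1 => h' (h1 ▸ hv)
        simp [dl, h1, h2]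
    · refine Finset.sum_eq_zero fun e he => ?_
      split_ifs with h
      · have h' : t e ∈ K := (hcl e he).1 h
        have h1 : s e ≠ v := fun h1 => hv (h1 ▸ h)
        have h2 : t e ≠ v := fun h1 => hv (h1 ▸ h')
        simp [dl, h1, h2]
      · rfl
  obtain ⟨e, he, heb⟩ := hb
  obtain ⟨e', he', hez⟩ := hz
  have hs : s e ∈ K := by
    rcases heb with h | h
    · rw [h]; exact hbK
    · exact (hcl e he).2 (h ▸ hbK)
  rcases hmin _ (Finset.filter_subset _ _) hev with h | h
  · exfalso
    have : e ∈ Z.filter fun e => s e ∈ K := by simp [he, hs]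
    rw [h] at this; simp at this
  · have hs' : s e' ∈ K := by
      rw [← h] at he'; exact (mem_filter.1 he').2
    have hzK : z ∈ K := by
      rcases hez with h | h
      · exact h ▸ hs'
      · exact h ▸ (hcl e' he').1 hs'
    simpa only [K, mem_filter, mem_univ, true_and] using hzK

end step
end TourAux

namespace TourAux
open Finset
section main
variable {V E : Type*} [DecidableEq V] [DecidableEq E] (s t : E → V)
variable (C : Finset E) (w : E → ℕ)

/-- weights lowered by one on the star of `b` -/
def lower (b : V) (e : E) : ℕ := w e - if st s t b e then 1 else 0

lemma st_ne {b : V} {e : E} (h : st s t b e) : s e ≠ t e := by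
  rcases h with ⟨h1, h2⟩ | ⟨h1, h2⟩
  · rw [h1]; exact h2.symm
  · rw [h1]; exact h2

lemma om_lower (hw : ∀ e, s e ≠ t e → 1 ≤ w e) (b : V) (Z : Finset E) :
    om C (lower s t w b) Z = om C w Z -
      ∑ e ∈ Z.filter (st s t b), (if e ∈ C then (1 : ℤ) else -1) := by
  unfold om
  rw [Finset.sum_filter, ← Finset.sum_sub_distrib]
  refine Finset.sum_congr rfl fun e _ => ?_
  unfold lower
  by_cases h : st s t b e
  · have := hw e (st_ne s t h)
    simp only [h, if_true]
    split_ifs <;> omega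
  · simp [h]

variable [Fintype V]

lemma cons_reduce (hw : ∀ e, s e ≠ t e → 1 ≤ w e)
    (hpar : ∀ Z : Finset E, (∀ v, bd s t Z v = 0) → Even (om C w Z))
    (hcons : ∀ Z : Finset E, (∀ v, bd s t Z v = 0) → 0 ≤ om C w Z)
    (a b : V) (hab : a ≠ b) (P : Finset E) (hP : ∀ v, bd s t P v = dl a v + dl b v)
    (hneg : om C w P < 0)
    (hopt : ∀ a' b' P', a' ≠ b' → (∀ v, bd s t P' v = dl a' v + dl b' v) → om C w P ≤ om C w P')
    (hcard : ∀ a' b' P', a' ≠ b' → (∀ v, bd s t P' v = dl a' v + dl b' v) →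
      om C w P = om C w P' → P.card ≤ P'.card) :
    (∃ f, ∀ e, (st s t b e ∧ e ∉ C) ↔ e = f) ∧
    ∀ Z : Finset E, (∀ v, bd s t Z v = 0) → 0 ≤ om C (lower s t w b) Z := by
  classical
  have hstar := opt_star s t C w hw hcons a b P hP hneg hopt
  -- `P` has exactly one edge at `b`
  obtain ⟨R, hRP, z, hz, hR, f, hfR, hf, hfall⟩ := reach_lemma s t P a b {b} hP
    (by simpa using hab) rfl
  rw [Set.mem_singleton_iff] at hz
  subst hz
  have hRP' : R = P := by
    have h1 : 0 ≤ om C w (P \ R) := hcons _ (fun v => by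
      rw [bd_sdiff s t hRP, hP, hR, z2])
    rw [om_sdiff C w hRP] at h1
    have h2 := hopt a z R hab hR
    have h3 := hcard a z R hab hR (by linarith)
    exact Finset.eq_of_subset_of_card_le hRP h3
  subst hRP'
  have hfst : st s t z f := by simpa [st] using hf
  have honly : ∀ e ∈ R, e ≠ f → s e ≠ z ∧ t e ≠ z := by
    intro e he hne
    simpa using hfall e he hne
  have hone : ∀ e, (st s t z e ∧ e ∉ C) ↔ e = f := by
    intro e
    constructor
    · rintro ⟨h1, h2⟩
      by_contra hne
      have h3 := honly e ((hstar e h1).2 h2) hne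
      rcases h1 with h1 | h1
      · exact h3.1 h1.1
      · exact h3.2 h1.1
    · rintro rfl
      exact ⟨hfst, (hstar e hfst).1 hfR⟩
  refine ⟨⟨f, hone⟩, ?_⟩
  have main : ∀ n, ∀ Z : Finset E, Z.card = n → (∀ v, bd s t Z v = 0) →
      0 ≤ om C (lower s t w z) Z := by
    intro n
    induction n using Nat.strong_induction_on with
    | _ n ih =>
    intro Z hn hZ
    by_cases hred : ∃ Z' ⊆ Z, (∀ v, bd s t Z' v = 0) ∧ Z' ≠ ∅ ∧ Z' ≠ Z
    · obtain ⟨Z', hsub, hZ', hne, hne'⟩ := hred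
      have hlt : Z'.card < Z.card :=
        Finset.card_lt_card (Finset.ssubset_iff_subset_ne.2 ⟨hsub, hne'⟩)
      have hpos : 0 < Z'.card := Finset.card_pos.2 (Finset.nonempty_iff_ne_empty.2 hne)
      have h1 := ih _ (by omega) Z' rfl hZ'
      have h2 := ih (Z \ Z').card (by rw [Finset.card_sdiff_of_subset hsub]; omega) (Z \ Z') rfl
        (fun v => by rw [bd_sdiff s t hsub, hZ, hZ', add_zero])
      rw [om_sdiff _ _ hsub] at h2
      linarith
    · have hmin : ∀ Z' ⊆ Z, (∀ v, bd s t Z' v = 0) → Z' = ∅ ∨ Z' = Z := by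
        intro Z' h1 h2
        by_contra h3
        push Not at h3
        exact hred ⟨Z', h1, h2, Finset.nonempty_iff_ne_empty.1 (by simpa [Finset.nonempty_iff_ne_empty] using h3.1), h3.2⟩
      rw [om_lower s t C w hw]
      have h0 := hcons Z hZ
      by_cases hemp : Z.filter (st s t z) = ∅
      · rw [hemp]; simpa using h0
      obtain ⟨e1, he1⟩ := Finset.nonempty_iff_ne_empty.2 hemp
      rw [mem_filter] at he1
      obtain ⟨Z1, hZ1, hZ1e, e2, hne, hfil⟩ := split_at s t Z hZ z e1 he1.1 he1.2
      have hZ1' : Z1 = Z := by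
        rcases hmin Z1 hZ1 hZ1e with h | h
        · rw [h] at hfil
          have : e1 ∈ ({e1, e2} : Finset E) := by simp
          rw [← hfil] at this; simp at this
        · exact h
      rw [hZ1'] at hfil
      have he2 : e2 ∈ Z.filter (st s t z) := by rw [hfil]; simp
      rw [mem_filter] at he2
      rw [hfil, Finset.sum_pair hne]
      by_cases hc1 : e1 ∈ C
      swap
      · rw [if_neg hc1]; split_ifs <;> linarith
      by_cases hc2 : e2 ∈ C
      swap
      · rw [if_neg hc2]; split_ifs; linarith
      rw [if_pos hc1, if_pos hc2]
      have hZne : om C w Z ≠ 0 := by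
        intro hZ0
        have hfC : f ∉ C := ((hone f).2 rfl).2
        have hfZ : f ∉ Z := by
          intro h
          have : f ∈ Z.filter (st s t z) := mem_filter.2 ⟨h, hfst⟩
          rw [hfil] at this
          simp only [mem_insert, mem_singleton] at this
          rcases this with h | h
          · exact hfC (h ▸ hc1)
          · exact hfC (h ▸ hc2)
        have hzZ : ∃ e ∈ Z, s e = z ∨ t e = z := by
          refine ⟨e1, he1.1, ?_⟩
          rcases he1.2 with h | h
          · exact Or.inl h.1
          · exact Or.inr h.1
        obtain ⟨Q, hQR, y, hy, hQ, g, hgQ, hg, hgall⟩ := reach_lemma s t R z a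
          {v | v = a ∨ (v ≠ z ∧ ∃ e ∈ Z, s e = v ∨ t e = v)}
          (fun v => by rw [hR, add_comm]) (by simpa using hab.symm) (Or.inl rfl)
        have hdisj : Disjoint Q Z := by
          rw [Finset.disjoint_left]
          intro e heQ heZ
          by_cases heg : e = g
          · subst heg
            have hest : st s t z e := by
              rcases hg with ⟨h1, h2⟩ | ⟨h1, h2⟩
              · have h3 : t e = z := by
                  by_contra h3
                  exact h2 (Or.inr ⟨h3, e, heZ, Or.inr rfl⟩)
                right
                refine ⟨h3, ?_⟩
                rw [h1]
                rcases hy with h | h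
                · rw [h]; exact hab
                · exact h.1
              · have h3 : s e = z := by
                  by_contra h3
                  exact h2 (Or.inr ⟨h3, e, heZ, Or.inl rfl⟩)
                left
                refine ⟨h3, ?_⟩
                rw [h1]
                rcases hy with h | h
                · rw [h]; exact hab
                · exact h.1
            have : e = f := (hone e).1 ⟨hest, (hstar e hest).1 (hQR heQ)⟩
            exact hfZ (this ▸ heZ)
          · have h1 := hgall e heQ heg
            have h3 : t e = z := by
              by_contra h3
              exact h1.2 (Or.inr ⟨h3, e, heZ, Or.inr rfl⟩)
            have hef : e ≠ f := fun h => hfZ (h ▸ heZ)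
            exact (honly e (hQR heQ) hef).2 h3
        have hyz : y ≠ z := by
          rcases hy with h | h
          · rw [h]; exact hab
          · exact h.1
        have hbdiff : ∀ v, bd s t (R \ Q) v = dl a v + dl y v := fun v => by
          rw [bd_sdiff s t hQR, hR, hQ]; linear_combination z2 (dl z v)
        have hQneg : om C w Q < 0 := by
          have h1 := om_sdiff C w hQR
          by_cases hya : y = a
          · have := hcons (R \ Q) (fun v => by rw [hbdiff, hya, z2])
            linarith
          · have h2 := hopt a y (R \ Q) (Ne.symm hya) hbdiff
            by_contra h3
            have h4 := hcard a y (R \ Q) (Ne.symm hya) hbdiff (by linarith)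
            rw [Finset.card_sdiff_of_subset hQR] at h4
            have : 0 < Q.card := Finset.card_pos.2 ⟨g, hgQ⟩
            have : Q.card ≤ R.card := Finset.card_le_card hQR
            omega
        by_cases hyV : ∃ e ∈ Z, s e = y ∨ t e = y
        · obtain ⟨C1, hC1, hC1b⟩ := min_even_join s t Z hmin hZ z y hzZ hyV
          have h1 := hcons (Q ∪ C1) (fun v => by
            rw [bd_union s t (Finset.disjoint_of_subset_right hC1 hdisj), hQ, hC1b, z2])
          have h2 := hcons (Q ∪ (Z \ C1)) (fun v => by
            rw [bd_union s t (Finset.disjoint_of_subset_right Finset.sdiff_subset hdisj), hQ,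
              bd_sdiff s t hC1, hZ, hC1b, zero_add, z2])
          rw [om_union _ _ (Finset.disjoint_of_subset_right hC1 hdisj)] at h1
          rw [om_union _ _ (Finset.disjoint_of_subset_right Finset.sdiff_subset hdisj),
            om_sdiff _ _ hC1] at h2
          linarith
        · have hya : y = a := by
            rcases hy with h | h
            · exact h
            · exact absurd h.2 hyV
          subst hya
          have hQ' : ∀ v, bd s t (Q ∪ Z) v = dl y v + dl z v := fun v => by
            rw [bd_union s t hdisj, hQ, hZ]; ring
          have hle : om C w (Q ∪ Z) ≤ om C w R := by
            have h1 := hcons (R \ Q) (fun v => by rw [hbdiff, z2])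
            rw [om_sdiff _ _ hQR] at h1
            rw [om_union _ _ hdisj]
            linarith
          have := opt_star s t C w hw hcons y z (Q ∪ Z) hQ' (by linarith)
            (fun a' b' P' h1 h2 => hle.trans (hopt a' b' P' h1 h2)) e1 he1.2
          exact this.1 (Finset.mem_union_right _ he1.1) hc1
      obtain ⟨m, hm⟩ := hpar Z hZ
      omega
  exact fun Z => main _ Z rfl

end main
end TourAux

namespace TourAux
open Finset
section main2
variable {V E : Type*} [DecidableEq V] [DecidableEq E]

/-- map identifying `v` with `u` -/
def ident (u v x : V) : V := if x = v then u else x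

lemma bd_ident (s t : E → V) (u v : V) (huv : u ≠ v) (Z : Finset E) (x : V) :
    bd (ident u v ∘ s) (ident u v ∘ t) Z x =
      if x = v then 0 else if x = u then bd s t Z u + bd s t Z v else bd s t Z x := by
  have key : ∀ y : V, dl (ident u v y) x =
      if x = v then 0 else if x = u then dl y u + dl y v else dl y x := by
    intro y
    unfold dl ident
    by_cases h1 : x = v
    · subst h1
      by_cases h2 : y = x
      · simp [h2, huv]
      · simp [h2]
    · by_cases h2 : x = u
      · subst h2
        by_cases h3 : y = v
        · subst h3; simp [huv, Ne.symm huv]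
        · simp [h3, huv]
      · by_cases h3 : y = v
        · subst h3; simp [h1, h2, Ne.symm h2, Ne.symm h1]
        · simp [h1, h2, h3]
  unfold bd
  simp only [Function.comp, key]
  split_ifs
  · simp
  · rw [← Finset.sum_add_distrib]; exact Finset.sum_congr rfl fun e _ => by ring
  · rfl

lemma contract_lift (s t : E → V) (w : E → ℕ) (e0 : E) (hne : s e0 ≠ t e0) (hw0 : w e0 = 0)
    (Z : Finset E)
    (hZ : ∀ x, bd (ident (s e0) (t e0) ∘ s) (ident (s e0) (t e0) ∘ t) Z x = 0) :
    ∃ Z' : Finset E, (∀ x, bd s t Z' x = 0) ∧ ∑ e ∈ Z', w e = ∑ e ∈ Z, w e := by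
  have hZ' := hZ
  simp only [bd_ident s t _ _ hne] at hZ'
  have h1 : ∀ x, x ≠ s e0 → x ≠ t e0 → bd s t Z x = 0 := by
    intro x h1 h2
    have := hZ' x
    simpa [h1, h2] using this
  have h2 : bd s t Z (s e0) + bd s t Z (t e0) = 0 := by
    have := hZ' (s e0)
    simpa [hne] using this
  have h3 : ∀ c : ZMod 2, c = 0 ∨ c = 1 := by decide
  rcases h3 (bd s t Z (s e0)) with h | h
  · refine ⟨Z, fun x => ?_, rfl⟩
    rw [h, zero_add] at h2
    by_cases hx : x = s e0
    · rw [hx, h]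
    by_cases hx' : x = t e0
    · rw [hx', h2]
    exact h1 x hx hx'
  · have h2' : bd s t Z (t e0) = 1 := by
      rw [h] at h2
      rcases h3 (bd s t Z (t e0)) with h' | h'
      · rw [h'] at h2; exact absurd h2 (by decide)
      · exact h'
    have hall : ∀ x, bd s t Z x + (dl (s e0) x + dl (t e0) x) = 0 := by
      intro x
      by_cases hx : x = s e0
      · subst hx; rw [h]; simp [dl, Ne.symm hne]; exact z2 1
      by_cases hx' : x = t e0
      · subst hx'; rw [h2']; simp [dl, hne]; exact z2 1
      rw [h1 x hx hx']; simp [dl, Ne.symm hx, Ne.symm hx']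
    by_cases he : e0 ∈ Z
    · refine ⟨Z.erase e0, fun x => ?_, ?_⟩
      · rw [bd_erase s t he, hall]
      · rw [← Finset.add_sum_erase _ _ he, hw0, zero_add]
    · refine ⟨insert e0 Z, fun x => ?_, ?_⟩
      · rw [bd_insert s t he, hall]
      · rw [Finset.sum_insert he, hw0, zero_add]

/-- A bridgeless multigraph has an even subgraph with two thirds of the weight. -/
theorem even_two_thirds [Fintype V] [Fintype E] : ∀ (n : ℕ) (s t : E → V) (w : E → ℕ),
    ∑ e, w e + (univ.filter fun e => s e ≠ t e).card = n →
    (∀ Z : Finset E, (∀ v, bd s t Z v = 0) → Even (∑ e ∈ Z, w e)) →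
    (∀ e, ∃ Z : Finset E, e ∈ Z ∧ ∀ v, bd s t Z v = 0) →
    ∃ C : Finset E, (∀ v, bd s t C v = 0) ∧ 2 * ∑ e, w e ≤ 3 * ∑ e ∈ C, w e := by
  classical
  intro n
  induction n using Nat.strong_induction_on with
  | _ n ih =>
  intro s t w hn hpar hcov
  by_cases hzero : ∃ e0, s e0 ≠ t e0 ∧ w e0 = 0
  · obtain ⟨e0, hne, hw0⟩ := hzero
    have hlt : ∑ e, w e + (univ.filter fun e => (ident (s e0) (t e0) ∘ s) e ≠
        (ident (s e0) (t e0) ∘ t) e).card < n := by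
      rw [← hn]
      apply Nat.add_lt_add_left
      apply Finset.card_lt_card
      rw [Finset.ssubset_iff_of_subset]
      · exact ⟨e0, by simpa using hne, fun h => (mem_filter.1 h).2 (by simp [ident, hne])⟩
      · intro e
        simp only [mem_filter, mem_univ, true_and, Function.comp]
        intro h h'
        exact h (by rw [h'])
    have hpar' : ∀ Z : Finset E, (∀ v, bd (ident (s e0) (t e0) ∘ s)
        (ident (s e0) (t e0) ∘ t) Z v = 0) → Even (∑ e ∈ Z, w e) := by
      intro Z hZ
      obtain ⟨Z', hZ', hs⟩ := contract_lift s t w e0 hne hw0 Z hZ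
      rw [← hs]; exact hpar Z' hZ'
    have hcov' : ∀ e, ∃ Z : Finset E, e ∈ Z ∧ ∀ v, bd (ident (s e0) (t e0) ∘ s)
        (ident (s e0) (t e0) ∘ t) Z v = 0 := by
      intro e
      obtain ⟨Z, he, hZ⟩ := hcov e
      refine ⟨Z, he, fun v => ?_⟩
      rw [bd_ident s t _ _ hne]
      simp [hZ]
    obtain ⟨C, hC, hCw⟩ := ih _ hlt _ _ w rfl hpar' hcov'
    obtain ⟨C', hC', hs⟩ := contract_lift s t w e0 hne hw0 C hC
    exact ⟨C', hC', by rw [hs]; exact hCw⟩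
  · push Not at hzero
    have hw : ∀ e, s e ≠ t e → 1 ≤ w e := fun e he => Nat.one_le_iff_ne_zero.2 (hzero e he)
    -- maximum weight even set
    obtain ⟨C, hCmem, hCmax⟩ := Finset.exists_max_image
      (univ.filter fun Z : Finset E => ∀ v, bd s t Z v = 0) (fun Z => ∑ e ∈ Z, w e)
      ⟨∅, mem_filter.2 ⟨mem_univ _, fun v => by simp [bd]⟩⟩
    simp only [mem_filter, mem_univ, true_and] at hCmem hCmax
    have hcons : ∀ Z : Finset E, (∀ v, bd s t Z v = 0) → 0 ≤ om C w Z := by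
      intro Z hZ
      rw [om_symmDiff]
      have := hCmax (symmDiff C Z) (fun v => by rw [bd_symmDiff, hCmem, hZ, add_zero])
      zify at this
      linarith
    have hparo : ∀ Z : Finset E, (∀ v, bd s t Z v = 0) → Even (om C w Z) := by
      intro Z hZ
      rw [om_symmDiff]
      have h1 := hpar C hCmem
      have h2 := hpar (symmDiff C Z) (fun v => by rw [bd_symmDiff, hCmem, hZ, add_zero])
      have h1' := (Int.even_coe_nat _).2 h1
      have h2' := (Int.even_coe_nat _).2 h2
      push_cast at h1' h2'
      exact h1'.sub h2'
    by_cases hJ : ∀ e, e ∉ C → w e = 0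
    · refine ⟨C, hCmem, ?_⟩
      have : ∑ e ∈ C, w e = ∑ e, w e :=
        Finset.sum_subset (Finset.subset_univ _) (fun e _ he => hJ e he)
      omega
    push Not at hJ
    obtain ⟨j, hjC, hjw⟩ := hJ
    have hjne : s j ≠ t j := by
      intro h
      have := hcons {j} (fun v => by simp [bd, h]; exact z2 _)
      simp [om, hjC] at this
      exact hjw this
    -- the optimal join
    let S : Finset (V × V × Finset E) := univ.filter fun x =>
      x.1 ≠ x.2.1 ∧ ∀ v, bd s t x.2.2 v = dl x.1 v + dl x.2.1 v
    have hjS : (s j, t j, {j}) ∈ S := mem_filter.2 ⟨mem_univ _, hjne, fun v => by simp [bd]⟩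
    obtain ⟨⟨a, b, P⟩, hPS, hPmin⟩ := Finset.exists_min_image S
      (fun x => toLex (om C w x.2.2, x.2.2.card)) ⟨_, hjS⟩
    have hPS' := hPS
    simp only [S, mem_filter, mem_univ, true_and] at hPS'
    obtain ⟨hab, hP⟩ := hPS'
    have hmin : ∀ a' b' P', a' ≠ b' → (∀ v, bd s t P' v = dl a' v + dl b' v) →
        om C w P < om C w P' ∨ (om C w P = om C w P' ∧ P.card ≤ P'.card) := by
      intro a' b' P' h1 h2
      have := hPmin (a', b', P') (by simp [S, h1, h2])
      rw [Prod.Lex.le_iff] at this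
      simpa using this
    have hneg : om C w P < 0 := by
      have h1 := hmin (s j) (t j) {j} hjne (fun v => by simp [bd])
      have h2 : om C w {j} = -(w j : ℤ) := by simp [om, hjC]
      rcases h1 with h1 | h1 <;> omega
    obtain ⟨⟨f, hf⟩, hcons'⟩ := cons_reduce s t C w hw hparo hcons a b hab P hP hneg
      (fun a' b' P' h1 h2 => by rcases hmin a' b' P' h1 h2 with h | h <;> omega)
      (fun a' b' P' h1 h2 h3 => by
        rcases hmin a' b' P' h1 h2 with h | h
        · omega
        · exact h.2)
    have hlow : ∀ Z : Finset E, ∑ e ∈ Z, lower s t w b e + (Z.filter (st s t b)).card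
        = ∑ e ∈ Z, w e := by
      intro Z
      rw [Finset.card_filter, ← Finset.sum_add_distrib]
      refine Finset.sum_congr rfl fun e _ => ?_
      unfold lower
      by_cases h : st s t b e
      · have := hw e (st_ne s t h)
        simp only [h, if_true]; omega
      · simp [h]
    have hstev : ∀ Z : Finset E, (∀ v, bd s t Z v = 0) → Even (Z.filter (st s t b)).card := by
      intro Z hZ
      have := hZ b
      rw [bd_eq_card] at this
      exact (ZMod.natCast_eq_zero_iff_even).1 this
    have hfst := ((hf f).2 rfl).1
    have hfC := ((hf f).2 rfl).2
    -- degree bookkeeping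
    have hD : (univ.filter (st s t b)).card = (C.filter (st s t b)).card + 1 := by
      have : univ.filter (st s t b) = insert f (C.filter (st s t b)) := by
        ext e
        simp only [mem_filter, mem_univ, true_and, mem_insert]
        constructor
        · intro h
          by_cases hc : e ∈ C
          · exact Or.inr ⟨hc, h⟩
          · exact Or.inl ((hf e).1 ⟨h, hc⟩)
        · rintro (rfl | h)
          · exact hfst
          · exact h.2
      rw [this, Finset.card_insert_of_notMem (by simp [hfC])]
    have hD2 : 2 ≤ (C.filter (st s t b)).card := by
      obtain ⟨Z, hfZ, hZ⟩ := hcov f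
      obtain ⟨m, hm⟩ := hstev Z hZ
      have h1 : 0 < (Z.filter (st s t b)).card :=
        Finset.card_pos.2 ⟨f, by simp [hfZ, hfst]⟩
      have h2 : (Z.filter (st s t b)).card ≤ (univ.filter (st s t b)).card :=
        Finset.card_le_card (Finset.filter_subset_filter _ (Finset.subset_univ _))
      obtain ⟨k, hk⟩ := hstev C hCmem
      omega
    obtain ⟨C', hC', hCw'⟩ := ih (∑ e, lower s t w b e + (univ.filter fun e => s e ≠ t e).card)
      (by have := hlow univ; omega) s t (lower s t w b) rfl
      (by
        intro Z hZ
        have h1 := hlow Z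
        have h2 := hstev Z hZ
        have h3 := hpar Z hZ
        rw [← h1] at h3
        exact (Nat.even_add.1 h3).2 h2) hcov
    have h1 := hcons' (symmDiff C C') (fun v => by rw [bd_symmDiff, hCmem, hC', add_zero])
    rw [om_symmDiff, symmDiff_symmDiff_cancel_left] at h1
    refine ⟨C, hCmem, ?_⟩
    have h2 := hlow univ
    have h3 := hlow C
    have h4 : ∑ e ∈ C', lower s t w b e ≤ ∑ e ∈ C, lower s t w b e := by
      zify; linarith
    omega

end main2
end TourAux

namespace TourAux
open Finset
section euler
variable {V E : Type*} [DecidableEq V] [DecidableEq E] (G : SimpleGraph V) (s t : E → V)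

/-- a walk using the edges `P` once each -/
def Tr (P : Finset E) (a b : V) (w : G.Walk a b) : Prop :=
  w.length = P.card ∧ (∀ v, bd s t P v = dl a v + dl b v) ∧
    ∀ e ∈ P, s e ∈ w.support ∧ t e ∈ w.support

lemma Tr.ext {P : Finset E} {a b : V} {w : G.Walk a b} (h : Tr G s t P a b w) (e : E) (he : e ∉ P)
    (hadj : G.Adj (s e) (t e)) (hb : s e = b ∨ t e = b) :
    ∃ c, ∃ w' : G.Walk a c, Tr G s t (insert e P) a c w' := by
  obtain ⟨h1, h2, h3⟩ := h
  have key : ∃ c, G.Adj b c ∧ (∀ v, dl (s e) v + dl (t e) v = dl b v + dl c v) ∧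
      ((s e = b ∧ t e = c) ∨ (s e = c ∧ t e = b)) := by
    rcases hb with h | h
    · exact ⟨t e, h ▸ hadj, fun v => by rw [h], Or.inl ⟨h, rfl⟩⟩
    · exact ⟨s e, h ▸ hadj.symm, fun v => by rw [h, add_comm], Or.inr ⟨rfl, h⟩⟩
  obtain ⟨c, hbc, hdl, hor⟩ := key
  refine ⟨c, w.concat hbc, ?_, fun v => ?_, ?_⟩
  · rw [Walk.length_concat, Finset.card_insert_of_notMem he, h1]
  · rw [bd_insert s t he, h2, hdl]; linear_combination z2 (dl b v)
  · intro e' he'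
    rw [Walk.support_concat]
    simp only [List.concat_eq_append, List.mem_append, List.mem_singleton]
    rcases Finset.mem_insert.1 he' with rfl | he'
    · have := w.end_mem_support
      rcases hor with ⟨h, h'⟩ | ⟨h, h'⟩ <;> rw [h, h'] <;> tauto
    · have := h3 e' he'
      tauto

lemma exists_loop (F : Finset E) (hadj : ∀ e ∈ F, G.Adj (s e) (t e))
    (hev : ∀ v, bd s t F v = 0) (y : V) (e : E) (he : e ∈ F) (hy : s e = y ∨ t e = y) :
    ∃ P ⊆ F, P.Nonempty ∧ ∃ w : G.Walk y y, Tr G s t P y y w := by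
  classical
  have h0 : Tr G s t (∅ : Finset E) y y Walk.nil :=
    ⟨by simp, fun v => by rw [z2]; simp [bd], by simp⟩
  obtain ⟨c, w0, hw0⟩ := h0.ext G s t e (by simp) (hadj e he) hy
  obtain ⟨P, hPm, hPmax⟩ := Finset.exists_max_image
    (F.powerset.filter fun P => ∃ v, ∃ w : G.Walk y v, Tr G s t P y v w) Finset.card
    ⟨insert e ∅, mem_filter.2 ⟨by simpa using he, c, w0, hw0⟩⟩
  rw [mem_filter, mem_powerset] at hPm
  obtain ⟨hPF, v, w, hw⟩ := hPm
  have hne : P.Nonempty := by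
    have := hPmax (insert e ∅) (mem_filter.2 ⟨by simpa using he, c, w0, hw0⟩)
    rw [← Finset.card_pos]
    have h1 : (insert e (∅ : Finset E)).card = 1 := by simp
    omega
  have hvy : v = y := by
    by_contra hvy
    have h1 : bd s t (F \ P) v = 1 := by
      rw [bd_sdiff s t hPF, hev, hw.2.1]
      simp [dl, Ne.symm hvy]
    have h2 : ∃ e' ∈ F \ P, s e' = v ∨ t e' = v := by
      by_contra h2
      push Not at h2
      have : bd s t (F \ P) v = 0 := by
        refine Finset.sum_eq_zero fun e' he' => ?_
        have := h2 e' he'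
        simp [dl, this.1, this.2]
      rw [this] at h1
      exact zero_ne_one h1
    obtain ⟨e', he', hv⟩ := h2
    rw [mem_sdiff] at he'
    obtain ⟨c', w', hw'⟩ := hw.ext G s t e' he'.2 (hadj e' he'.1) hv
    have := hPmax (insert e' P) (mem_filter.2
      ⟨mem_powerset.2 (Finset.insert_subset he'.1 hPF), c', w', hw'⟩)
    rw [Finset.card_insert_of_notMem he'.2] at this
    omega
  subst hvy
  exact ⟨P, hPF, hne, w, hw⟩

theorem euler (F : Finset E) (hadj : ∀ e ∈ F, G.Adj (s e) (t e))
    (hev : ∀ v, bd s t F v = 0) (r : V)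
    (hconn : ∀ K : Set V, r ∈ K → (∀ e ∈ F, (s e ∈ K ↔ t e ∈ K)) → ∀ v, v ∈ K) :
    ∃ w : G.Walk r r, (∀ u, u ∈ w.support) ∧ w.length ≤ F.card := by
  classical
  have h0 : Tr G s t (∅ : Finset E) r r Walk.nil :=
    ⟨by simp, fun v => by rw [z2]; simp [bd], by simp⟩
  obtain ⟨Z, hZm, hZmax⟩ := Finset.exists_max_image
    (F.powerset.filter fun P => ∃ w : G.Walk r r, Tr G s t P r r w) Finset.card
    ⟨∅, mem_filter.2 ⟨by simp, _, h0⟩⟩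
  rw [mem_filter, mem_powerset] at hZm
  obtain ⟨hZF, w, hw⟩ := hZm
  have hall : ∀ e ∈ F, (s e ∈ w.support ∨ t e ∈ w.support) → e ∈ Z := by
    intro e he hor
    by_contra heZ
    obtain ⟨y, hy, hyw⟩ : ∃ y, (s e = y ∨ t e = y) ∧ y ∈ w.support := by
      rcases hor with h | h
      · exact ⟨_, Or.inl rfl, h⟩
      · exact ⟨_, Or.inr rfl, h⟩
    have hZev : ∀ v, bd s t Z v = 0 := fun v => by rw [hw.2.1, z2]
    obtain ⟨P, hPF, hPne, l, hl⟩ := exists_loop G s t (F \ Z)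
      (fun e he => hadj e (mem_sdiff.1 he).1)
      (fun v => by rw [bd_sdiff s t hZF, hev, hZev, add_zero]) y e
      (mem_sdiff.2 ⟨he, heZ⟩) hy
    have hdis : Disjoint Z P := by
      rw [Finset.disjoint_left]
      intro x hx hx'
      exact (mem_sdiff.1 (hPF hx')).2 hx
    have hlen : (w.takeUntil y hyw).length + (w.dropUntil y hyw).length = w.length := by
      rw [← Walk.length_append, Walk.take_spec]
    have hTr : Tr G s t (Z ∪ P) r r
        ((w.takeUntil y hyw).append (l.append (w.dropUntil y hyw))) := by
      refine ⟨?_, fun v => ?_, ?_⟩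
      · rw [Walk.length_append, Walk.length_append, Finset.card_union_of_disjoint hdis, hl.1,
          ← hw.1]
        omega
      · rw [bd_union s t hdis, hw.2.1, hl.2.1, z2, z2, add_zero]
      · have hmem : ∀ x, x ∈ w.support ∨ x ∈ l.support →
            x ∈ ((w.takeUntil y hyw).append (l.append (w.dropUntil y hyw))).support := by
          intro x hx
          simp only [Walk.mem_support_append_iff]
          rcases hx with hx | hx
          · rw [← Walk.take_spec w hyw, Walk.mem_support_append_iff] at hx
            tauto
          · tauto
        intro e' he'
        rcases Finset.mem_union.1 he' with h | h
        · exact ⟨hmem _ (Or.inl (hw.2.2 e' h).1), hmem _ (Or.inl (hw.2.2 e' h).2)⟩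
        · exact ⟨hmem _ (Or.inr (hl.2.2 e' h).1), hmem _ (Or.inr (hl.2.2 e' h).2)⟩
    have := hZmax (Z ∪ P) (mem_filter.2 ⟨mem_powerset.2
      (Finset.union_subset hZF (hPF.trans Finset.sdiff_subset)), _, hTr⟩)
    rw [Finset.card_union_of_disjoint hdis] at this
    have := Finset.card_pos.2 hPne
    omega
  refine ⟨w, hconn {v | v ∈ w.support} w.start_mem_support ?_, ?_⟩
  · intro e he
    simp only [Set.mem_ofPred_eq]
    exact ⟨fun h => (hw.2.2 e (hall e he (Or.inl h))).2,
      fun h => (hw.2.2 e (hall e he (Or.inr h))).1⟩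
  · rw [hw.1]; exact Finset.card_le_card hZF

end euler
end TourAux

namespace TourAux
open Finset
section tree
variable {V : Type*}

/-- rooted spanning tree given by parent map and depth -/
structure RT (G : SimpleGraph V) (r : V) (p : V → V) (d : V → ℕ) : Prop where
  pr : p r = r
  dr : d r = 0
  adj : ∀ v, v ≠ r → G.Adj v (p v)
  dp : ∀ v, v ≠ r → d v = d (p v) + 1

/-- `a` is an ancestor of `v` -/
def anc (p : V → V) (a v : V) : Prop := ∃ k, p^[k] v = a

lemma anc_refl (p : V → V) (v : V) : anc p v v := ⟨0, rfl⟩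
lemma anc_p (p : V → V) (v : V) : anc p (p v) v := ⟨1, rfl⟩
lemma anc_trans {p : V → V} {a b c : V} (h : anc p a b) (h' : anc p b c) : anc p a c := by
  obtain ⟨k, rfl⟩ := h
  obtain ⟨l, rfl⟩ := h'
  exact ⟨k + l, by rw [Function.iterate_add_apply]⟩

lemma anc_step {p : V → V} {a v : V} : anc p a v ↔ a = v ∨ anc p a (p v) := by
  constructor
  · rintro ⟨k, rfl⟩
    cases k with
    | zero => left; rfl
    | succ k => right; exact ⟨k, by rw [Function.iterate_succ_apply]⟩
  · rintro (rfl | h)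
    · exact anc_refl _ _
    · exact anc_trans h (anc_p _ _)

variable {G : SimpleGraph V} {r : V} {p : V → V} {d : V → ℕ}

lemma RT.ne_of_pos (T : RT G r p d) {v : V} (h : 0 < d v) : v ≠ r := by
  rintro rfl; rw [T.dr] at h; omega

lemma RT.eq_of_zero (T : RT G r p d) {v : V} (h : d v = 0) : v = r := by
  by_contra h'; have := T.dp v h'; omega

lemma RT.tind (T : RT G r p d) {P : V → Prop} (h0 : P r) (h1 : ∀ v, v ≠ r → P (p v) → P v) :
    ∀ v, P v := by
  have : ∀ n v, d v = n → P v := by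
    intro n
    induction n with
    | zero => intro v hv; rw [T.eq_of_zero hv]; exact h0
    | succ n ih =>
      intro v hv
      have h := T.ne_of_pos (v := v) (by omega)
      exact h1 v h (ih _ (by have := T.dp v h; omega))
  exact fun v => this _ v rfl

lemma RT.anc_r (T : RT G r p d) {a : V} (h : anc p a r) : a = r := by
  obtain ⟨k, rfl⟩ := h
  exact Function.iterate_fixed T.pr k

lemma RT.root_anc (T : RT G r p d) (v : V) : anc p r v :=
  T.tind (P := fun v => anc p r v) (anc_refl _ _) (fun v _ h => anc_trans h (anc_p _ _)) v

lemma RT.anc_d (T : RT G r p d) {a v : V} (h : anc p a v) : d a ≤ d v ∧ (d a = d v → a = v) := by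
  revert h
  refine T.tind (P := fun v => anc p a v → d a ≤ d v ∧ (d a = d v → a = v)) ?_ ?_ v
  · intro h; rw [T.anc_r h]; simp
  · intro v hv ih h
    rcases anc_step.1 h with rfl | h
    · simp
    · have := ih h
      have h2 := T.dp v hv
      exact ⟨by omega, fun h => by omega⟩

lemma RT.anc_lt (T : RT G r p d) {a v : V} (h : anc p a v) (hne : a ≠ v) : d a < d v := by
  have := T.anc_d h
  rcases Nat.lt_or_ge (d a) (d v) with h' | h'
  · exact h'
  · exact absurd (this.2 (by omega)) hne

lemma RT.anc_antisymm (T : RT G r p d) {a v : V} (h : anc p a v) (h' : anc p v a) : a = v :=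
  (T.anc_d h).2 (le_antisymm (T.anc_d h).1 (T.anc_d h').1)

lemma RT.anc_comp (T : RT G r p d) {a b v : V} (ha : anc p a v) (hb : anc p b v) (h : d a ≤ d b) :
    anc p a b := by
  revert ha hb
  refine T.tind (P := fun v => anc p a v → anc p b v → anc p a b) ?_ ?_ v
  · intro h1 h2; rw [T.anc_r h1, T.anc_r h2]; exact anc_refl _ _
  · intro v hv ih h1 h2
    rcases anc_step.1 h2 with rfl | h2
    · exact h1
    rcases anc_step.1 h1 with rfl | h1
    · have h3 := (T.anc_d h2).1
      have h4 := T.dp a hv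
      omega
    · exact ih h1 h2

lemma RT.anc_child (T : RT G r p d) {a v : V} (h : anc p a v) (hne : a ≠ v) :
    ∃ c, c ≠ r ∧ p c = a ∧ anc p c v := by
  revert h hne
  refine T.tind (P := fun v => anc p a v → a ≠ v → ∃ c, c ≠ r ∧ p c = a ∧ anc p c v) ?_ ?_ v
  · intro h1 h2; exact absurd (T.anc_r h1) h2
  · intro v hv ih h1 h2
    rcases anc_step.1 h1 with rfl | h1
    · exact absurd rfl h2
    by_cases h3 : a = p v
    · exact ⟨v, hv, h3.symm, anc_refl _ _⟩
    · obtain ⟨c, hc, hca, hcv⟩ := ih h1 h3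
      exact ⟨c, hc, hca, anc_trans hcv (anc_p _ _)⟩

lemma RT.child_unique (T : RT G r p d) {c c' v : V} (hc : c ≠ r) (hc' : c' ≠ r) (h : p c = p c')
    (h1 : anc p c v) (h2 : anc p c' v) : c = c' := by
  have e : d c = d c' := by rw [T.dp c hc, T.dp c' hc', h]
  have := T.anc_comp h1 h2 e.le
  exact (T.anc_d this).2 e

/-- normal: adjacent vertices are comparable -/
theorem exists_normal [Fintype V] (hG : G.Connected) (r : V) :
    ∃ p d, RT G r p d ∧ ∀ u v, G.Adj u v → anc p u v ∨ anc p v u := by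
  classical
  have h0 : ∃ p d, RT G r p d := by
    have : ∀ v, ∃ u, v ≠ r → G.Adj v u ∧ G.dist v r = G.dist u r + 1 := by
      intro v
      by_cases hv : v = r
      · exact ⟨v, fun h => absurd hv h⟩
      obtain ⟨w, hw⟩ := hG.exists_walk_length_eq_dist v r
      cases w with
      | nil => exact absurd rfl hv
      | cons h q =>
        rename_i u
        refine ⟨u, fun _ => ⟨h, ?_⟩⟩
        rw [Walk.length_cons] at hw
        have h1 := SimpleGraph.dist_le q
        obtain ⟨q', hq'⟩ := hG.exists_walk_length_eq_dist u r
        have h2 := SimpleGraph.dist_le (Walk.cons h q')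
        rw [Walk.length_cons] at h2
        omega
    choose p hp using this
    refine ⟨fun v => if v = r then r else p v, fun v => G.dist v r, by simp, by simp, ?_, ?_⟩
    · intro v hv; simpa [hv] using (hp v hv).1
    · intro v hv; simpa [hv] using (hp v hv).2
  have hbd : ∀ p d, RT G r p d → ∀ v, d v < Fintype.card V := by
    intro p d T v
    have h1 : ∀ v, ∀ j ≤ d v, ∃ x, d x = j := by
      refine T.tind ?_ ?_
      · intro j hj; exact ⟨r, by have := T.dr; omega⟩
      · intro v hv ih j hj
        by_cases h : j = d v
        · exact ⟨v, h.symm⟩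
        · exact ih j (by have := T.dp v hv; omega)
    have h2 : Finset.range (d v + 1) ⊆ Finset.univ.image d := by
      intro j hj
      obtain ⟨x, hx⟩ := h1 v j (by simpa [Nat.lt_succ_iff] using hj)
      exact Finset.mem_image.2 ⟨x, Finset.mem_univ _, hx⟩
    have h3 := (Finset.card_le_card h2).trans Finset.card_image_le
    rw [Finset.card_range, Finset.card_univ] at h3
    omega
  have hstep : ∀ p d, RT G r p d → ∀ u v, G.Adj u v → ¬ anc p u v → ¬ anc p v u → d v ≤ d u →
      ∃ p' d', RT G r p' d' ∧ ∑ x, d x < ∑ x, d' x := by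
    intro p d T u v huv h1 h2 hd
    have hvr : v ≠ r := by rintro rfl; exact h2 (T.root_anc u)
    refine ⟨Function.update p v u,
      fun x => d x + if anc p v x then d u + 1 - d v else 0, ⟨?_, ?_, ?_, ?_⟩, ?_⟩
    · rw [Function.update_of_ne hvr.symm, T.pr]
    · have : ¬ anc p v r := fun h => hvr (T.anc_r h)
      simp [this, T.dr]
    · intro x hx
      by_cases h : x = v
      · subst h; rw [Function.update_self]; exact huv.symm
      · rw [Function.update_of_ne h]; exact T.adj x hx
    · intro x hx
      by_cases h : x = v
      · subst h; rw [Function.update_self]; simp only [h2, anc_refl, if_true, if_false]; omega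
      · rw [Function.update_of_ne h]
        have : anc p v x ↔ anc p v (p x) := by
          rw [anc_step]
          constructor
          · rintro (h' | h')
            · exact absurd h'.symm h
            · exact h'
          · exact Or.inr
        simp only [this]
        have := T.dp x hx
        omega
    · apply Finset.sum_lt_sum
      · intro i _; omega
      · exact ⟨v, Finset.mem_univ _, by simp only [anc_refl, if_true]; omega⟩
  by_contra hcon
  push Not at hcon
  have hinf : ∀ n, ∃ p d, RT G r p d ∧ n ≤ ∑ x, d x := by
    intro n
    induction n with
    | zero => obtain ⟨p, d, h⟩ := h0; exact ⟨p, d, h, by omega⟩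
    | succ n ih =>
      obtain ⟨p, d, T, hn⟩ := ih
      obtain ⟨u, v, huv, h1, h2⟩ := hcon p d T
      rcases le_total (d v) (d u) with h | h
      · obtain ⟨p', d', T', h'⟩ := hstep p d T u v huv h1 h2 h
        exact ⟨p', d', T', by omega⟩
      · obtain ⟨p', d', T', h'⟩ := hstep p d T v u huv.symm h2 h1 h
        exact ⟨p', d', T', by omega⟩
  obtain ⟨p, d, T, hn⟩ := hinf (Fintype.card V * Fintype.card V + 1)
  have : ∑ x, d x ≤ ∑ x : V, Fintype.card V := Finset.sum_le_sum fun x _ => (hbd p d T x).le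
  simp at this
  omega
end tree
end TourAux

namespace TourAux
open Finset
section blocks
variable {V : Type*} {G : SimpleGraph V}

/-- connected without cut vertex -/
def Bic (G : SimpleGraph V) (A : Set V) : Prop :=
  (G.induce A).Connected ∧ ∀ v ∈ A, (G.induce (A \ {v})).Preconnected

/-- pairwise reachability inside a set -/
def RIn (G : SimpleGraph V) (S : Set V) (a b : V) : Prop :=
  ∃ (ha : a ∈ S) (hb : b ∈ S), (G.induce S).Reachable ⟨a, ha⟩ ⟨b, hb⟩

lemma RIn.refl {S : Set V} {a : V} (h : a ∈ S) : RIn G S a a := ⟨h, h, Reachable.refl _⟩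
lemma RIn.symm {S : Set V} {a b : V} (h : RIn G S a b) : RIn G S b a := by
  obtain ⟨h1, h2, h3⟩ := h; exact ⟨h2, h1, h3.symm⟩
lemma RIn.trans {S : Set V} {a b c : V} (h : RIn G S a b) (h' : RIn G S b c) : RIn G S a c := by
  obtain ⟨h1, h2, h3⟩ := h
  obtain ⟨h4, h5, h6⟩ := h'
  exact ⟨h1, h5, h3.trans h6⟩
lemma RIn.adj {S : Set V} {a b : V} (ha : a ∈ S) (hb : b ∈ S) (h : G.Adj a b) : RIn G S a b :=
  ⟨ha, hb, Adj.reachable (by simpa using h)⟩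
lemma RIn.mono {S T : Set V} {a b : V} (hST : S ⊆ T) (h : RIn G S a b) : RIn G T a b := by
  obtain ⟨h1, h2, h3⟩ := h
  exact ⟨hST h1, hST h2, h3.map (induceHomOfLE G hST).toHom⟩

lemma precon_iff {S : Set V} :
    (G.induce S).Preconnected ↔ ∀ a ∈ S, ∀ b ∈ S, RIn G S a b := by
  constructor
  · intro h a ha b hb; exact ⟨ha, hb, h _ _⟩
  · rintro h ⟨a, ha⟩ ⟨b, hb⟩
    obtain ⟨_, _, h'⟩ := h a ha b hb
    exact h'

lemma precon_union {S T : Set V} (hS : (G.induce S).Preconnected) (hT : (G.induce T).Preconnected)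
    {x : V} (h1 : x ∈ S) (h2 : x ∈ T) : (G.induce (S ∪ T)).Preconnected := by
  rw [precon_iff] at *
  have : ∀ a ∈ S ∪ T, RIn G (S ∪ T) a x := by
    rintro a (ha | ha)
    · exact (hS a ha x h1).mono Set.subset_union_left
    · exact (hT a ha x h2).mono Set.subset_union_right
  intro a ha b hb
  exact (this a ha).trans (this b hb).symm

lemma Bic.del {A : Set V} (h : Bic G A) (w : V) : (G.induce (A \ {w})).Preconnected := by
  by_cases hw : w ∈ A
  · exact h.2 w hw
  · rw [Set.sdiff_singleton_eq_self hw]; exact h.1.preconnected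

lemma Bic.union {A B : Set V} (hA : Bic G A) (hB : Bic G B) {u v : V} (huv : u ≠ v)
    (h1 : u ∈ A) (h2 : v ∈ A) (h3 : u ∈ B) (h4 : v ∈ B) : Bic G (A ∪ B) := by
  refine ⟨(connected_iff _).2 ⟨precon_union hA.1.preconnected hB.1.preconnected h1 h3,
    ⟨⟨u, Or.inl h1⟩⟩⟩, ?_⟩
  intro w _
  rw [Set.union_sdiff_distrib]
  by_cases hu : u = w
  · exact precon_union (hA.del w) (hB.del w) (x := v) ⟨h2, by rintro rfl; exact huv hu⟩
      ⟨h4, by rintro rfl; exact huv hu⟩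
  · exact precon_union (hA.del w) (hB.del w) (x := u) ⟨h1, hu⟩ ⟨h3, hu⟩

lemma bic_pair {a b : V} (h : G.Adj a b) : Bic G {a, b} := by
  refine ⟨(connected_iff _).2 ⟨?_, ⟨⟨a, by simp⟩⟩⟩, ?_⟩
  · rw [precon_iff]
    rintro x (rfl | rfl) y (rfl | rfl)
    · exact RIn.refl (by simp)
    · exact RIn.adj (by simp) (by simp) h
    · exact RIn.adj (by simp) (by simp) h.symm
    · exact RIn.refl (by simp)
  · intro w hw
    rw [precon_iff]
    rintro x ⟨hx, hx'⟩ y ⟨hy, hy'⟩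
    have : x = y := by
      simp only [Set.mem_insert_iff, Set.mem_singleton_iff] at *
      rcases hw with rfl | rfl <;> rcases hx with rfl | rfl <;> rcases hy with rfl | rfl <;> simp_all
    subst this
    exact RIn.refl ⟨hx, hx'⟩

lemma exists_block [Finite V] {A : Set V} (hA : Bic G A) : ∃ B, IsBlock G B ∧ A ⊆ B := by
  obtain ⟨B, hAB, hB⟩ := (Set.toFinite {B : Set V | Bic G B}).exists_le_maximal hA
  refine ⟨B, ⟨hB.1.1, hB.1.2, ?_⟩, hAB⟩
  intro B' h1 h2 h3
  exact le_antisymm (hB.2 ⟨h2, h3⟩ h1) h1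

lemma absorb {B A : Set V} (hB : IsBlock G B) (hA : Bic G A) {u v : V} (huv : u ≠ v)
    (h1 : u ∈ B) (h2 : v ∈ B) (h3 : u ∈ A) (h4 : v ∈ A) : A ⊆ B := by
  have h5 : Bic G B := ⟨hB.1, hB.2.1⟩
  have h6 := h5.union hA huv h1 h2 h3 h4
  have h7 := hB.2.2 (B ∪ A) Set.subset_union_left h6.1 h6.2
  rw [← h7]; exact Set.subset_union_right

variable {r : V} {p : V → V} {d : V → ℕ}

lemma RT.vert (T : RT G r p d) {S : Set V} {a v : V} (h : anc p a v)
    (hS : ∀ y, anc p a y → anc p y v → y ∈ S) : RIn G S a v := by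
  revert h hS
  refine T.tind (P := fun v => anc p a v → (∀ y, anc p a y → anc p y v → y ∈ S) → RIn G S a v)
    ?_ ?_ v
  · intro h hS
    have := T.anc_r h
    subst this
    exact RIn.refl (hS _ h h)
  · intro v hv ih h hS
    rcases anc_step.1 h with rfl | h'
    · exact RIn.refl (hS _ h h)
    · refine (ih h' fun y h1 h2 => hS y h1 (anc_trans h2 (anc_p _ _))).trans
        (RIn.adj (hS _ h' (anc_p _ _)) (hS _ h (anc_refl _ _)) (T.adj v hv).symm)

lemma RT.cycle (T : RT G r p d) {x h : V} (hx : anc p h x) (hadj : G.Adj x h) :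
    Bic G {u | anc p h u ∧ anc p u x} := by
  constructor
  · refine (connected_iff _).2 ⟨?_, ⟨⟨h, anc_refl _ _, hx⟩⟩⟩
    rw [precon_iff]
    have : ∀ u ∈ {u | anc p h u ∧ anc p u x}, RIn G {u | anc p h u ∧ anc p u x} h u := by
      intro u hu
      exact T.vert hu.1 fun y h1 h2 => ⟨h1, anc_trans h2 hu.2⟩
    intro a ha b hb
    exact (this a ha).symm.trans (this b hb)
  · intro w hw
    rw [precon_iff]
    have up : ∀ u ∈ {u | anc p h u ∧ anc p u x}, ¬ anc p w u →
        RIn G ({u | anc p h u ∧ anc p u x} \ {w}) h u := by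
      intro u hu hwu
      refine T.vert hu.1 fun y h1 h2 => ⟨⟨h1, anc_trans h2 hu.2⟩, ?_⟩
      rintro rfl
      exact hwu h2
    have down : ∀ u ∈ {u | anc p h u ∧ anc p u x}, anc p w u → u ≠ w →
        RIn G ({u | anc p h u ∧ anc p u x} \ {w}) u x := by
      intro u hu hwu hne
      refine T.vert hu.2 fun y h1 h2 => ⟨⟨anc_trans hu.1 h1, h2⟩, ?_⟩
      rintro rfl
      exact hne (T.anc_antisymm h1 hwu)
    have xh : w ≠ h → w ≠ x → RIn G ({u | anc p h u ∧ anc p u x} \ {w}) x h := fun h1 h2 =>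
      RIn.adj ⟨⟨hx, anc_refl _ _⟩, fun h' => h2 h'.symm⟩
        ⟨⟨anc_refl _ _, hx⟩, fun h' => h1 h'.symm⟩ hadj
    have xw : ∀ u ∈ {u | anc p h u ∧ anc p u x}, anc p w u → u ≠ w → w ≠ x := by
      rintro u hu h1 h2 rfl
      exact h2 (T.anc_antisymm hu.2 h1)
    have wh : ∀ u ∈ {u | anc p h u ∧ anc p u x}, ¬ anc p w u → w ≠ h := by
      rintro u hu h1 rfl
      exact h1 hu.1
    rintro a ⟨ha, ha'⟩ b ⟨hb, hb'⟩
    by_cases h1 : anc p w a <;> by_cases h2 : anc p w b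
    · exact (down a ha h1 ha').trans (down b hb h2 hb').symm
    · exact ((down a ha h1 ha').trans (xh (wh b hb h2) (xw a ha h1 ha'))).trans (up b hb h2)
    · exact (((down b hb h2 hb').trans (xh (wh a ha h1) (xw b hb h2 hb'))).trans (up a ha h1)).symm
    · exact (up a ha h1).symm.trans (up b hb h2)

/-- back edges -/
def bk (G : SimpleGraph V) (p : V → V) (x h : V) : Prop := G.Adj x h ∧ anc p h (p x) ∧ h ≠ p x

/-- the back edge `(x,h)` covers the tree edge from `c` to `p c` -/
def cov (p : V → V) (x h c : V) : Prop := anc p c x ∧ anc p h (p c) ∧ h ≠ p c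

/-- covered tree edges -/
def Kc (G : SimpleGraph V) (p : V → V) (c : V) : Prop := ∃ x h, bk G p x h ∧ cov p x h c

lemma RT.cov_ne (T : RT G r p d) {x h c : V} (hc : cov p x h c) : c ≠ r ∧ p c ≠ r := by
  have h1 : p c ≠ r := by
    intro h1
    have h2 := hc.2.1
    have h3 := hc.2.2
    rw [h1] at h2 h3
    exact h3 (T.anc_r h2)
  exact ⟨fun h2 => h1 (by rw [h2, T.pr]), h1⟩

lemma RT.tree_block [Finite V] (T : RT G r p d) {c : V} (hc : c ≠ r) :
    ∃ B, IsBlock G B ∧ c ∈ B ∧ p c ∈ B := by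
  obtain ⟨B, hB, h⟩ := exists_block (bic_pair (T.adj c hc))
  exact ⟨B, hB, h (by simp), h (by simp)⟩

lemma RT.bridge (T : RT G r p d) (hN : ∀ u v, G.Adj u v → anc p u v ∨ anc p v u)
    {c : V} (hc : c ≠ r) (hK : ¬ Kc G p c) {B : Set V} (hB : IsBlock G B) (h1 : c ∈ B)
    (h2 : p c ∈ B) : ∀ u ∈ B, u = p c ∨ anc p c u := by
  intro u hu
  by_contra hcon
  push Not at hcon
  have hcp : c ≠ p c := (T.adj c hc).ne
  have h3 := hB.2.1 _ h2 ⟨c, h1, hcp⟩ ⟨u, hu, hcon.1⟩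
  obtain ⟨w⟩ := h3
  obtain ⟨e, he, h4, h5⟩ := w.exists_boundary_dart {y | anc p c y.1} (anc_refl _ _) hcon.2
  obtain ⟨⟨⟨y, hy⟩, ⟨z, hz⟩⟩, hyz⟩ := e
  have hyz' : G.Adj y z := by simpa using hyz
  change anc p c y at h4
  change ¬ anc p c z at h5
  have hzp : z ≠ p c := hz.2
  have hzy : anc p z y := by
    rcases hN _ _ hyz' with h | h
    · exact absurd (anc_trans h4 h) h5
    · exact h
  have hzc : anc p z c := by
    rcases le_total (d z) (d c) with h | h
    · exact T.anc_comp hzy h4 h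
    · exact absurd (T.anc_comp h4 hzy h) h5
  have hzpc : anc p z (p c) := by
    rcases anc_step.1 hzc with rfl | h
    · exact absurd (anc_refl _ _) h5
    · exact h
  apply hK
  refine ⟨y, z, ⟨hyz', ?_⟩, h4, hzpc, hzp⟩
  rcases anc_step.1 h4 with rfl | h
  · exact ⟨hzpc, hzp⟩
  · refine ⟨anc_trans hzc h, ?_⟩
    rintro rfl
    exact h5 h

lemma RT.count [Fintype V] (T : RT G r p d) (hN : ∀ u v, G.Adj u v → anc p u v ∨ anc p v u) :
    {c | c ≠ r ∧ ¬ Kc G p c}.ncard ≤ {B : Set V | IsBlock G B}.ncard := by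
  have : ∀ c, ∃ B, c ≠ r → IsBlock G B ∧ c ∈ B ∧ p c ∈ B := by
    intro c
    by_cases hc : c = r
    · exact ⟨∅, fun h => absurd hc h⟩
    · obtain ⟨B, h⟩ := T.tree_block hc; exact ⟨B, fun _ => h⟩
  choose f hf using this
  refine Set.ncard_le_ncard_of_injOn f (fun c hc => (hf c hc.1).1) ?_ (Set.toFinite _)
  intro c hc c' hc' hcc
  obtain ⟨hB, h1, h2⟩ := hf c hc.1
  obtain ⟨hB', h1', h2'⟩ := hf c' hc'.1
  have b1 := T.bridge hN hc.1 hc.2 hB h1 h2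
  have b2 := T.bridge hN hc'.1 hc'.2 hB' h1' h2'
  rw [hcc] at b1
  rw [hcc] at h1 h2
  have d1 := T.dp c hc.1
  have d2 := T.dp c' hc'.1
  rcases b1 c' h1' with h | h
  · exfalso
    rcases b1 _ h2' with h3 | h3
    · rw [← h3] at h; rw [← h] at d2; omega
    · have := (T.anc_d h3).1; rw [← h] at d1; omega
  · rcases b2 c h1 with h' | h'
    · exfalso
      rcases b2 _ h2 with h3 | h3
      · rw [← h3] at h'; rw [← h'] at d1; omega
      · have := (T.anc_d h3).1; rw [← h'] at d2; omega
    · exact T.anc_antisymm h h'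

end blocks
end TourAux

namespace TourAux
open Finset
section selection
variable {V : Type*} {G : SimpleGraph V}

/-- a block is subcubic or claw-free -/
def GoodBlk (G : SimpleGraph V) (B : Set V) : Prop :=
  (∀ v ∈ B, {u | u ∈ B ∧ G.Adj v u}.ncard ≤ 3) ∨
      IsEmpty (completeBipartiteGraph (Fin 1) (Fin 3) ↪g (G.induce B))

lemma no_claw [Finite V] {B : Set V} (hB : GoodBlk G B) {v a b c e : V} (hv : v ∈ B) (ha : a ∈ B)
    (hb : b ∈ B) (hc : c ∈ B) (he : e ∈ B) (va : G.Adj v a) (vb : G.Adj v b) (vc : G.Adj v c)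
    (ve : G.Adj v e) (ab : a ≠ b) (ac : a ≠ c) (bc : b ≠ c) (ea : e ≠ a) (eb : e ≠ b) (ec : e ≠ c)
    (nab : ¬ G.Adj a b) (nac : ¬ G.Adj a c) (nbc : ¬ G.Adj b c) : False := by
  classical
  rcases hB with h | h
  · have h1 := h v hv
    have h2 : (({a, b, c, e} : Finset V) : Set V) ⊆ {u | u ∈ B ∧ G.Adj v u} := by
      intro x hx
      simp only [Finset.coe_insert, Finset.coe_singleton, Set.mem_insert_iff,
        Set.mem_singleton_iff] at hx
      rcases hx with rfl | rfl | rfl | rfl <;> constructor <;> assumption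
    have h3 := Set.ncard_le_ncard h2 (Set.toFinite _)
    rw [Set.ncard_coe_finset] at h3
    have h4 : ({a, b, c, e} : Finset V).card = 4 := by
      rw [Finset.card_insert_of_notMem, Finset.card_insert_of_notMem,
        Finset.card_insert_of_notMem, Finset.card_singleton] <;>
      simp [ab, ac, bc, ea.symm, eb.symm, ec.symm]
    omega
  · obtain ⟨f, f0, f1, f2, f3⟩ : ∃ f : Fin 1 ⊕ Fin 3 → B, (∀ i, f (Sum.inl i) = ⟨v, hv⟩) ∧
        f (Sum.inr 0) = ⟨a, ha⟩ ∧ f (Sum.inr 1) = ⟨b, hb⟩ ∧ f (Sum.inr 2) = ⟨c, hc⟩ :=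
      ⟨Sum.elim (fun _ => ⟨v, hv⟩) (![⟨a, ha⟩, ⟨b, hb⟩, ⟨c, hc⟩] : Fin 3 → B),
        fun _ => rfl, rfl, rfl, rfl⟩
    refine h.false ⟨⟨f, ?_⟩, ?_⟩
    · rintro (i | i) (j | j) hij
      · exact congrArg _ (Subsingleton.elim _ _)
      · exfalso
        fin_cases j <;> simp [f0, f1, f2, f3, va.ne, vb.ne, vc.ne] at hij
      · exfalso
        fin_cases i <;> simp [f0, f1, f2, f3, va.ne.symm, vb.ne.symm, vc.ne.symm] at hij
      · fin_cases i <;> fin_cases j <;>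
          simp [f1, f2, f3, ab, ac, bc, ab.symm, ac.symm, bc.symm] at hij ⊢
    · intro i j
      change G.Adj (f i).1 (f j).1 ↔ _
      have nba : ¬ G.Adj b a := fun h => nab h.symm
      have nca : ¬ G.Adj c a := fun h => nac h.symm
      have ncb : ¬ G.Adj c b := fun h => nbc h.symm
      rcases i with i | i <;> rcases j with j | j
      · simp [f0]
      · fin_cases j <;> simp [f0, f1, f2, f3, va, vb, vc]
      · fin_cases i <;> simp [f0, f1, f2, f3, va.symm, vb.symm, vc.symm]
      · fin_cases i <;> fin_cases j <;> simp [f1, f2, f3, nab, nac, nbc, nba, nca, ncb]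

variable {r : V} {p : V → V} {d : V → ℕ}

/-- the chosen back edges which enter `p c` from below `c` -/
noncomputable def Hc (p : V → V) (B' : Finset (V × V)) (c : V) : Finset (V × V) := by
  classical
  exact B'.filter fun b => b.2 = p c ∧ anc p c b.1

lemma mem_Hc {B' : Finset (V × V)} {c : V} {b : V × V} :
    b ∈ Hc p B' c ↔ b ∈ B' ∧ b.2 = p c ∧ anc p c b.1 := by
  simp [Hc]

lemma RT.bk_ne (T : RT G r p d) {x h : V} (hb : bk G p x h) : x ≠ r := by
  rintro rfl
  have h1 := hb.2.1
  have h2 := hb.2.2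
  rw [T.pr] at h1 h2
  exact h2 (T.anc_r h1)

theorem RT.select [Fintype V] (T : RT G r p d) (hN : ∀ u v, G.Adj u v → anc p u v ∨ anc p v u)
    (hgood : ∀ B, IsBlock G B → GoodBlk G B) :
    ∃ B' : Finset (V × V), (∀ b ∈ B', bk G p b.1 b.2) ∧
      (∀ c, Kc G p c → ∃ b ∈ B', cov p b.1 b.2 c) ∧
      ∀ c, c ≠ r → (Kc G p c → (Hc p B' c).card ≤ 1) ∧ (Hc p B' c).card ≤ 2 := by
  classical
  obtain ⟨B', hB', hmin⟩ := Finset.exists_min_image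
    ((univ : Finset (Finset (V × V))).filter fun B' => (∀ b ∈ B', bk G p b.1 b.2) ∧
      (∀ c, Kc G p c → ∃ b ∈ B', cov p b.1 b.2 c)) (fun B' => ∑ b ∈ B', (d b.2 + 1))
    ⟨univ.filter fun b => bk G p b.1 b.2, by
      simp only [mem_filter, mem_univ, true_and]
      refine ⟨fun b h => h, ?_⟩
      rintro c ⟨x, h, h1, h2⟩
      exact ⟨(x, h), h1, h2⟩⟩
  simp only [mem_filter, mem_univ, true_and] at hB' hmin
  obtain ⟨hbk, hcov⟩ := hB'
  have inc : ∀ x y v, (x, v) ∈ B' → (y, v) ∈ B' → x ≠ y → ¬ anc p x y := by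
    intro x y v hx hy hxy h
    have h1 := hmin (B'.erase (x, v)) ⟨fun b hb => hbk b (mem_of_mem_erase hb), ?_⟩
    · have h2 := Finset.sum_erase_add B' (fun b => d b.2 + 1) hx
      simp only at h2
      omega
    · intro c hc
      obtain ⟨b, hb, hbc⟩ := hcov c hc
      by_cases hbx : b = (x, v)
      · subst hbx
        exact ⟨(y, v), mem_erase.2 ⟨by simp [hxy.symm], hy⟩, anc_trans hbc.1 h, hbc.2⟩
      · exact ⟨b, mem_erase.2 ⟨hbx, hb⟩, hbc⟩
  have nadj : ∀ x y v, (x, v) ∈ B' → (y, v) ∈ B' → x ≠ y → ¬ G.Adj x y := by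
    intro x y v hx hy hxy h
    rcases hN _ _ h with h | h
    · exact inc x y v hx hy hxy h
    · exact inc y x v hy hx hxy.symm h
  have upp : ∀ x v, (x, v) ∈ B' → v ≠ r → ¬ G.Adj x (p v) := by
    intro x v hx hv hadj
    have hdv := T.dp v hv
    have hb := hbk _ hx
    have key : ∀ y, anc p v y → anc p (p v) y ∧ p v ≠ y := by
      intro y hy
      refine ⟨anc_trans (anc_p _ _) hy, ?_⟩
      rintro rfl
      have := (T.anc_d hy).1
      omega
    have h1 := hmin (insert (x, p v) (B'.erase (x, v))) ⟨?_, ?_⟩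
    · have h2 := Finset.sum_erase_add B' (fun b => d b.2 + 1) hx
      have h3 : ∑ b ∈ insert (x, p v) (B'.erase (x, v)), (d b.2 + 1) ≤
          ∑ b ∈ B'.erase (x, v), (d b.2 + 1) + (d (p v) + 1) := by
        by_cases h4 : (x, p v) ∈ B'.erase (x, v)
        · rw [insert_eq_of_mem h4]; omega
        · rw [sum_insert h4, add_comm]
      simp only at h2
      omega
    · intro b hb'
      rcases mem_insert.1 hb' with rfl | hb'
      · exact ⟨hadj, key _ hb.2.1⟩
      · exact hbk b (mem_of_mem_erase hb')
    · intro c hc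
      obtain ⟨b, hb', hbc⟩ := hcov c hc
      by_cases hbx : b = (x, v)
      · subst hbx
        exact ⟨(x, p v), mem_insert_self _ _, hbc.1, key _ hbc.2.1⟩
      · exact ⟨b, mem_insert_of_mem (mem_erase.2 ⟨hbx, hb'⟩), hbc⟩
  refine ⟨B', hbk, hcov, ?_⟩
  intro c hc
  obtain ⟨B, hB, hcB, hpB⟩ := T.tree_block hc
  have hgB := hgood B hB
  have hcp : c ≠ p c := (T.adj c hc).ne
  have tail : ∀ b ∈ Hc p B' c, ∃ x, b = (x, p c) ∧ (x, p c) ∈ B' ∧ x ∈ B ∧ G.Adj (p c) x ∧ c ≠ x ∧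
      anc p c x := by
    rintro ⟨x, h⟩ hb
    rw [mem_Hc] at hb
    obtain ⟨h1, h2, h3⟩ := hb
    simp only at h2 h3
    subst h2
    have h4 := hbk _ h1
    refine ⟨x, rfl, h1, ?_, h4.1.symm, ?_, h3⟩
    · have := T.cycle (x := x) (h := p c) (anc_trans (anc_p _ _) h3) h4.1
      exact absorb hB this hcp hcB hpB ⟨anc_p _ _, h3⟩ ⟨anc_refl _ _, anc_trans (anc_p _ _) h3⟩
        ⟨anc_trans (anc_p _ _) h3, anc_refl _ _⟩
    · rintro rfl; exact h4.2.2 rfl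
  constructor
  · intro hK
    by_contra hcard
    obtain ⟨b1, hb1, b2, hb2, hne⟩ := Finset.one_lt_card.1 (not_le.1 hcard)
    obtain ⟨x, rfl, hx1, hx2, hx3, hx4, hx5⟩ := tail b1 hb1
    obtain ⟨y, rfl, hy1, hy2, hy3, hy4, hy5⟩ := tail b2 hb2
    have hxy : x ≠ y := by rintro rfl; exact hne rfl
    obtain ⟨x', h', hbk', hcov'⟩ := hK
    have hpr := (T.cov_ne hcov').2
    have hppB : p (p c) ∈ B := by
      have h1 : anc p h' x' := anc_trans hbk'.2.1 (anc_p _ _)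
      have h2 : anc p (p c) x' := anc_trans (anc_p _ _) hcov'.1
      refine absorb hB (T.cycle h1 hbk'.1) hcp hcB hpB
        ⟨anc_trans hcov'.2.1 (anc_p _ _), hcov'.1⟩ ⟨hcov'.2.1, h2⟩ ⟨?_, anc_trans (anc_p _ _) h2⟩
      rcases anc_step.1 hcov'.2.1 with h | h
      · exact absurd h hcov'.2.2
      · exact h
    have d1 := T.dp c hc
    have d2 := T.dp _ hpr
    have d3 := (T.anc_d hx5).1
    have d4 := (T.anc_d hy5).1
    refine no_claw hgB hpB hppB hx2 hy2 hcB (T.adj _ hpr) hx3 hy3 (T.adj c hc).symm ?_ ?_ hxy ?_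
      hx4 hy4 (fun h => upp x _ hx1 hpr h.symm) (fun h => upp y _ hy1 hpr h.symm)
      (nadj x y _ hx1 hy1 hxy)
    · intro h; rw [h] at d2; omega
    · intro h; rw [h] at d2; omega
    · intro h; rw [← h] at d2; omega
  · by_contra hcard
    obtain ⟨b1, hb1, b2, hb2, b3, hb3, h12, h13, h23⟩ := Finset.two_lt_card.1 (not_le.1 hcard)
    obtain ⟨x, rfl, hx1, hx2, hx3, hx4, hx5⟩ := tail b1 hb1
    obtain ⟨y, rfl, hy1, hy2, hy3, hy4, hy5⟩ := tail b2 hb2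
    obtain ⟨z, rfl, hz1, hz2, hz3, hz4, hz5⟩ := tail b3 hb3
    have hxy : x ≠ y := by rintro rfl; exact h12 rfl
    have hxz : x ≠ z := by rintro rfl; exact h13 rfl
    have hyz : y ≠ z := by rintro rfl; exact h23 rfl
    exact no_claw hgB hpB hx2 hy2 hz2 hcB hx3 hy3 hz3 (T.adj c hc).symm hxy hxz hyz hx4 hy4 hz4
      (nadj x y _ hx1 hy1 hxy) (nadj x z _ hx1 hz1 hxz) (nadj y z _ hy1 hz1 hyz)
end selection
end TourAux

namespace TourAux
open Finset
section assembly
variable {V : Type*} {G : SimpleGraph V} {r : V} {p : V → V} {d : V → ℕ}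

lemma RT.cov_iff (T : RT G r p d) {x h c0 c : V} (h0 : c0 ≠ r) (h1 : p c0 = h) (h2 : anc p c0 x) :
    cov p x h c ↔ anc p c x ∧ anc p c0 c ∧ c ≠ c0 := by
  subst h1
  have d0 := T.dp c0 h0
  constructor
  · intro hc
    have d1 := T.dp c (T.cov_ne hc).1
    have hne : c ≠ c0 := by rintro rfl; exact hc.2.2 rfl
    refine ⟨hc.1, ?_, hne⟩
    rcases le_total (d c0) (d c) with h | h
    · exact T.anc_comp h2 hc.1 h
    · exfalso
      rcases anc_step.1 (T.anc_comp hc.1 h2 h) with h3 | h3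
      · exact hne h3
      · have := (T.anc_d h3).1
        have := (T.anc_d hc.2.1).1
        omega
  · rintro ⟨h3, h4, h5⟩
    rcases anc_step.1 h4 with h6 | h6
    · exact absurd h6.symm h5
    · refine ⟨h3, anc_trans (anc_p _ _) h6, ?_⟩
      intro h7
      have := (T.anc_d h6).1
      rw [h7] at d0
      omega

lemma RT.telescope [Fintype V] [DecidableEq V] (T : RT G r p d) (c0 v : V) (S : V → Finset V)
    (hS : ∀ x c, c ∈ S x ↔ anc p c x ∧ anc p c0 c ∧ c ≠ c0) :
    ∀ x, anc p c0 x → ∑ c ∈ S x, (dl c v + dl (p c) v) = dl x v + dl c0 v := by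
  have base : ∀ x, x = c0 → ∑ c ∈ S x, (dl c v + dl (p c) v) = dl x v + dl c0 v := by
    rintro x rfl
    have : S x = ∅ := by
      rw [Finset.eq_empty_iff_forall_notMem]
      intro c hc
      rw [hS] at hc
      exact hc.2.2 (T.anc_antisymm hc.1 hc.2.1)
    rw [this, Finset.sum_empty, z2]
  refine T.tind ?_ ?_
  · intro h
    exact base r (T.anc_r h).symm
  · intro x hx ih h
    by_cases hxc : x = c0
    · exact base x hxc
    rcases anc_step.1 h with h' | h'
    · exact absurd h'.symm hxc
    have hne : x ∉ S (p x) := by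
      rw [hS]
      intro h3
      have := (T.anc_d h3.1).1
      have := T.dp x hx
      omega
    have hins : S x = insert x (S (p x)) := by
      ext c
      rw [mem_insert, hS, hS, anc_step (v := x)]
      constructor
      · rintro ⟨h3 | h3, h4⟩
        · exact Or.inl h3
        · exact Or.inr ⟨h3, h4⟩
      · rintro (rfl | ⟨h3, h4⟩)
        · exact ⟨Or.inl rfl, h, hxc⟩
        · exact ⟨Or.inr h3, h4⟩
    rw [hins, sum_insert hne, ih h']
    linear_combination z2 (dl (p x) v)

theorem RT.tour [Fintype V] (T : RT G r p d) (B' : Finset (V × V))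
    (hbk : ∀ b ∈ B', bk G p b.1 b.2) (hcov : ∀ c, Kc G p c → ∃ b ∈ B', cov p b.1 b.2 c)
    (hH : ∀ c, c ≠ r → (Kc G p c → (Hc p B' c).card ≤ 1) ∧ (Hc p B' c).card ≤ 2) :
    ∃ w : G.Walk r r, (∀ u, u ∈ w.support) ∧
      3 * w.length + 4 ≤ 4 * Fintype.card V + 2 * {c | c ≠ r ∧ ¬ Kc G p c}.ncard := by
  classical
  have hcc : ∀ b : V × V, ∃ c, b ∈ B' → c ≠ r ∧ p c = b.2 ∧ anc p c b.1 := by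
    intro b
    by_cases hb : b ∈ B'
    · have h := hbk b hb
      obtain ⟨c, hc⟩ := T.anc_child (a := b.2) (v := b.1) (anc_trans h.2.1 (anc_p _ _)) h.1.ne.symm
      exact ⟨c, fun _ => hc⟩
    · exact ⟨r, fun h => absurd h hb⟩
  choose cc hcc using hcc
  have hKr : ∀ c, Kc G p c → c ≠ r := by
    rintro c ⟨x, h, _, h2⟩
    exact (T.cov_ne h2).1
  -- the auxiliary multigraph
  let s : V ⊕ (V × V) → V := Sum.elim (fun c => c) (fun b => b.1)
  let t : V ⊕ (V × V) → V := Sum.elim (fun c => if Kc G p c then p c else c)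
    (fun b => if b ∈ B' then cc b else b.1)
  let w : V ⊕ (V × V) → ℕ := Sum.elim (fun c => if Kc G p c then 2 else 0) (fun _ => 0)
  have hloop : ∀ e, s e = t e → ∃ Z, e ∈ Z ∧ ∀ v, bd s t Z v = 0 := by
    intro e he
    refine ⟨{e}, mem_singleton_self _, fun v => ?_⟩
    unfold bd
    rw [sum_singleton, he, z2]
  have hcyc : ∀ b ∈ B', ∃ Z, Sum.inr b ∈ Z ∧ (∀ c, cov p b.1 b.2 c → Sum.inl c ∈ Z) ∧
      ∀ v, bd s t Z v = 0 := by
    intro b hb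
    obtain ⟨h0, h1, h2⟩ := hcc b hb
    refine ⟨({c | cov p b.1 b.2 c} : Finset V).disjSum {b}, by simp, fun c hc => by simp [hc], ?_⟩
    intro v
    unfold bd
    rw [sum_disjSum, sum_singleton]
    have e1 : ∑ c ∈ ({c | cov p b.1 b.2 c} : Finset V),
        (dl (s (Sum.inl c)) v + dl (t (Sum.inl c)) v) =
        ∑ c ∈ ({c | cov p b.1 b.2 c} : Finset V), (dl c v + dl (p c) v) := by
      refine sum_congr rfl fun c hc => ?_
      have : Kc G p c := ⟨b.1, b.2, hbk b hb, (mem_filter.1 hc).2⟩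
      simp [s, t, this]
    have e2 := T.telescope (cc b) v
      (fun x => ({c | anc p c x ∧ anc p (cc b) c ∧ c ≠ cc b} : Finset V))
      (fun x c => by simp) b.1 h2
    have e3 : ({c | cov p b.1 b.2 c} : Finset V) =
        ({c | anc p c b.1 ∧ anc p (cc b) c ∧ c ≠ cc b} : Finset V) := by
      ext c
      rw [mem_filter, mem_filter, T.cov_iff h0 h1 h2]
    rw [e1, e3]
    rw [e2]
    simp only [s, t, Sum.elim_inr, hb, if_true]
    exact z2 _
  obtain ⟨C, hC, hCw⟩ := even_two_thirds _ s t w rfl (by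
      intro Z _
      refine Finset.even_sum _ fun e _ => ?_
      rcases e with c | b
      · by_cases h : Kc G p c <;> simp [w, h]
      · simp [w]) (by
      rintro (c | b)
      · by_cases h : Kc G p c
        · obtain ⟨b, hb, hbc⟩ := hcov c h
          obtain ⟨Z, _, h1, h2⟩ := hcyc b hb
          exact ⟨Z, h1 c hbc, h2⟩
        · exact hloop _ (by simp [s, t, h])
      · by_cases h : b ∈ B'
        · obtain ⟨Z, h1, _, h2⟩ := hcyc b h
          exact ⟨Z, h1, h2⟩
        · exact hloop _ (by simp [s, t, h]))
  let X : V → ℕ := fun c => if Kc G p c ∧ Sum.inl c ∈ C then 1 else 0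
  let S : Finset (V × V) := B'.filter fun b => Sum.inr b ∈ C
  let q : V → ℕ := fun c => (Hc p S c).card
  let m : V → ℕ := fun c => 2 - X c - q c
  have hS : ∀ b ∈ S, b ∈ B' := fun b hb => (mem_filter.1 hb).1
  have hqle : ∀ c, q c ≤ (Hc p B' c).card := by
    intro c
    refine card_le_card fun b hb => ?_
    rw [mem_Hc] at hb ⊢
    exact ⟨hS b hb.1, hb.2⟩
  have hm : ∀ c, c ≠ r → m c + X c + q c = 2 := by
    intro c hc
    have h1 := hqle c
    have h2 := hH c hc
    by_cases h : Kc G p c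
    · have h3 := h2.1 h
      have h4 : X c ≤ 1 := by simp only [X]; split_ifs <;> omega
      simp only [m]; omega
    · have h4 : X c = 0 := by simp [X, h]
      simp only [m]; omega
  have hfib : ∀ c, c ≠ r → S.filter (fun b => cc b = c) = Hc p S c := by
    intro c hc
    ext b
    rw [mem_filter, mem_Hc]
    constructor
    · rintro ⟨h1, rfl⟩
      have := hcc b (hS b h1)
      exact ⟨h1, this.2.1.symm, this.2.2⟩
    · rintro ⟨h1, h2, h3⟩
      have := hcc b (hS b h1)
      exact ⟨h1, T.child_unique this.1 hc (this.2.1.trans h2) this.2.2 h3⟩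
  have hmaps : ∀ b ∈ S, cc b ∈ univ.erase r := fun b hb =>
    mem_erase.2 ⟨(hcc b (hS b hb)).1, mem_univ _⟩
  have hScard : S.card = ∑ c ∈ univ.erase r, q c := by
    rw [card_eq_sum_card_fiberwise hmaps]
    exact sum_congr rfl fun c hc => by rw [hfib c (mem_erase.1 hc).1]
  have hXr : X r = 0 := by
    have : ¬ Kc G p r := fun h => hKr r h rfl
    simp [X, this]
  -- the tour multigraph
  let s2 : (Σ _ : V, ℕ) ⊕ (V × V) → V := Sum.elim (fun c => c.1) (fun b => b.1)
  let t2 : (Σ _ : V, ℕ) ⊕ (V × V) → V := Sum.elim (fun c => p c.1) (fun b => b.2)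
  let F : Finset ((Σ _ : V, ℕ) ⊕ (V × V)) :=
    ((univ.erase r).sigma fun c => range (m c)).disjSum S
  have hFcard : F.card + ∑ c, X c = 2 * (Fintype.card V - 1) := by
    simp only [F]
    rw [card_disjSum, card_sigma, hScard, ← Finset.sum_erase univ hXr, ← sum_add_distrib,
      ← sum_add_distrib]
    rw [sum_congr rfl (g := fun _ => 2)]
    · rw [sum_const, card_erase_of_mem (mem_univ _), card_univ, smul_eq_mul, mul_comm]
    · intro c hc
      have := hm c (mem_erase.1 hc).1
      rw [card_range]; omega
  have hFadj : ∀ e ∈ F, G.Adj (s2 e) (t2 e) := by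
    rintro (c | b) he
    · simp only [F, inl_mem_disjSum, mem_sigma, mem_erase] at he
      exact T.adj _ he.1.1
    · simp only [F, inr_mem_disjSum] at he
      exact (hbk b (hS b he)).1
  have hFev : ∀ v, bd s2 t2 F v = 0 := by
    intro v
    have h1 : bd s2 t2 F v = ∑ c ∈ univ.erase r, (m c : ZMod 2) * (dl c v + dl (p c) v) +
        ∑ b ∈ S, (dl b.1 v + dl b.2 v) := by
      unfold bd
      simp only [F]
      rw [sum_disjSum, sum_sigma]
      congr 1
      refine sum_congr rfl fun c _ => ?_
      simp only [s2, t2, Sum.elim_inl]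
      rw [sum_const, card_range, nsmul_eq_mul]
    have h2 : bd s t C v = ∑ c ∈ univ.erase r, (X c : ZMod 2) * (dl c v + dl (p c) v) +
        ∑ b ∈ S, (dl b.1 v + dl (cc b) v) := by
      have : bd s t C v = ∑ e, if e ∈ C then dl (s e) v + dl (t e) v else 0 := by
        unfold bd
        rw [Finset.sum_ite_mem, Finset.univ_inter]
      rw [this, Fintype.sum_sum_type]
      congr 1
      · rw [Finset.sum_erase _ (by rw [hXr]; simp)]
        refine sum_congr rfl fun c _ => ?_
        by_cases h3 : Sum.inl c ∈ C <;> by_cases h4 : Kc G p c <;> simp [h3, h4, X, s, t, z2]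
      · simp only [S]
        rw [Finset.sum_filter, ← Finset.sum_subset (Finset.subset_univ B')]
        · refine sum_congr rfl fun b hb => ?_
          simp [s, t, hb]
        · intro b _ hb
          simp [s, t, hb, z2]
    have h3 : ∑ b ∈ S, (dl (cc b) v + dl b.2 v) =
        ∑ c ∈ univ.erase r, (q c : ZMod 2) * (dl c v + dl (p c) v) := by
      rw [← Finset.sum_fiberwise_of_maps_to hmaps]
      refine sum_congr rfl fun c hc => ?_
      rw [hfib c (mem_erase.1 hc).1]
      rw [sum_congr rfl (g := fun _ => dl c v + dl (p c) v)]
      · rw [sum_const, nsmul_eq_mul]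
      · intro b hb
        rw [← hfib c (mem_erase.1 hc).1, mem_filter] at hb
        have := hcc b (hS b hb.1)
        rw [← hb.2, this.2.1]
    have h4 : bd s2 t2 F v + bd s t C v + 0 = 0 := by
      have e1 : ∑ b ∈ S, (dl b.1 v + dl b.2 v) + ∑ b ∈ S, (dl b.1 v + dl (cc b) v) =
          ∑ b ∈ S, (dl (cc b) v + dl b.2 v) := by
        rw [← sum_add_distrib]
        refine sum_congr rfl fun b _ => ?_
        linear_combination z2 (dl b.1 v)
      have e2 : ∑ c ∈ univ.erase r, (m c : ZMod 2) * (dl c v + dl (p c) v) +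
          ∑ c ∈ univ.erase r, (X c : ZMod 2) * (dl c v + dl (p c) v) +
          ∑ c ∈ univ.erase r, (q c : ZMod 2) * (dl c v + dl (p c) v) = 0 := by
        rw [← sum_add_distrib, ← sum_add_distrib]
        refine sum_eq_zero fun c hc => ?_
        have h5 : ((m c + X c + q c : ℕ) : ZMod 2) = 0 := by
          rw [hm c (mem_erase.1 hc).1]; rfl
        push_cast at h5
        linear_combination (dl c v + dl (p c) v) * h5
      rw [h1, h2]
      rw [h3] at e1
      linear_combination e1 + e2
    rw [hC v] at h4
    simpa using h4
  obtain ⟨wk, hw1, hw2⟩ := euler G s2 t2 F hFadj hFev r (by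
    intro K hrK hK
    have hbot : ∀ n c, Finset.univ.sup d - d c = n → ∀ x, anc p c x → (x ∈ K ↔ c ∈ K) := by
      intro n
      induction n using Nat.strong_induction_on with
      | _ n ih =>
        intro c hn x hx
        by_cases hxc : c = x
        · rw [hxc]
        obtain ⟨c', hc', hpc, hcx⟩ := T.anc_child hx hxc
        have hd := T.dp c' hc'
        have hle : d c' ≤ Finset.univ.sup d := Finset.le_sup (mem_univ c')
        rw [hpc] at hd
        have ih' := ih (Finset.univ.sup d - d c') (by omega) c' rfl
        rw [ih' x hcx]
        have hmm := hm c' hc'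
        by_cases hm0 : m c' = 0
        · have hX : X c' ≤ 1 := by simp only [X]; split_ifs <;> omega
          have hq : 0 < (Hc p S c').card := by
            have : 0 < q c' := by omega
            exact this
          obtain ⟨b, hb⟩ := card_pos.1 hq
          rw [mem_Hc] at hb
          have h1 := hK (Sum.inr b) (by simp only [F, inr_mem_disjSum]; exact hb.1)
          simp only [s2, t2, Sum.elim_inr] at h1
          rw [hb.2.1, hpc] at h1
          rw [← h1, ih' b.1 hb.2.2]
        · have h1 := hK (Sum.inl ⟨c', 0⟩) (by
            simp only [F, inl_mem_disjSum, mem_sigma, mem_erase, mem_univ, and_true, mem_range]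
            exact ⟨hc', by omega⟩)
          simp only [s2, t2, Sum.elim_inl] at h1
          rw [hpc] at h1
          exact h1
    intro v
    exact (hbot _ r rfl v (T.root_anc v)).2 hrK)
  refine ⟨wk, hw1, ?_⟩
  have w1 : ∑ e, w e = 2 * (univ.filter fun c => Kc G p c).card := by
    rw [Fintype.sum_sum_type]
    simp only [w, Sum.elim_inl, Sum.elim_inr, sum_const_zero, add_zero]
    rw [← Finset.sum_filter, sum_const, smul_eq_mul, mul_comm]
  have w2 : ∑ e ∈ C, w e = 2 * ∑ c, X c := by
    have : ∑ e ∈ C, w e = ∑ e, if e ∈ C then w e else 0 := by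
      rw [Finset.sum_ite_mem, Finset.univ_inter]
    rw [this, Fintype.sum_sum_type, mul_sum]
    simp only [w, Sum.elim_inl, Sum.elim_inr, ite_self, sum_const_zero, add_zero]
    refine sum_congr rfl fun c _ => ?_
    by_cases h3 : Sum.inl c ∈ C <;> by_cases h4 : Kc G p c <;> simp [h3, h4, X]
  have hk : {c | c ≠ r ∧ ¬ Kc G p c}.ncard + (univ.filter fun c => Kc G p c).card + 1 =
      Fintype.card V := by
    have e1 : {c | c ≠ r ∧ ¬ Kc G p c} =
        (((univ.filter fun c => ¬ Kc G p c).erase r : Finset V) : Set V) := by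
      ext c; simp [and_comm]
    rw [e1, Set.ncard_coe_finset, card_erase_of_mem]
    · have := Finset.card_filter_add_card_filter_not (s := (univ : Finset V)) (fun c => Kc G p c)
      have h2 : 0 < (univ.filter fun c => ¬ Kc G p c).card :=
        card_pos.2 ⟨r, by simp; exact fun h => hKr r h rfl⟩
      rw [card_univ] at this
      omega
    · simp; exact fun h => hKr r h rfl
  rw [w1, w2] at hCw
  omega
end assembly
end TourAux

/-- If a connected simple graph `G` on `n` vertices has exactly
`k ≥ 1` blocks, each of which has maximum degree at most 3 or is claw-free, then
`G` has a spanning closed walk of length at most `4n/3 + 2k/3 − 4/3`. -/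
theorem spanning_closed_walk_blockwise_subcubic_or_clawfree
    {V : Type*} [Fintype V]
    (G : SimpleGraph V)
    (hconn : G.Connected)
    (k : ℕ) (hk : 1 ≤ k)
    (hblocks : {B : Set V | IsBlock G B}.ncard = k)
    (hblockprop : ∀ B : Set V, IsBlock G B →
      (∀ v ∈ B, {u | u ∈ B ∧ G.Adj v u}.ncard ≤ 3) ∨
      IsEmpty (completeBipartiteGraph (Fin 1) (Fin 3) ↪g (G.induce B))) :
    ∃ (v : V) (w : G.Walk v v), (∀ u : V, u ∈ w.support) ∧
      (w.length : ℝ) ≤ 4 * Fintype.card V / 3 + 2 * k / 3 - 4 / 3 := by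
  classical
  obtain ⟨r⟩ := hconn.nonempty
  obtain ⟨p, d, T, hN⟩ := TourAux.exists_normal hconn r
  obtain ⟨B', h1, h2, h3⟩ := T.select hN hblockprop
  obtain ⟨w, hw, hl⟩ := T.tour B' h1 h2 h3
  have h4 := T.count hN
  rw [hblocks] at h4
  refine ⟨r, w, hw, ?_⟩
  have h5 : 3 * w.length + 4 ≤ 4 * Fintype.card V + 2 * k := by omega
  have h6 : (3 * w.length + 4 : ℝ) ≤ 4 * Fintype.card V + 2 * k := by exact_mod_cast h5
  linarith
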